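/- arXiv:1308.5695 — 3 statements merged into one kernel-verified Lean document; each statement's English description precedes it below -/
import Mathlib

section
/- Let n ≥ 1, let p ∈ (−1/n, 0) ∪ (0, ∞), and let q be defined by 1/q = 1/p + n. If w : ℝⁿ → [0,∞) is a measurable p-concave function, then the measure μ with density w with respect to Lebesgue measure is q-concave: for all Borel sets A, B ⊆ ℝⁿ with μ(A)·μ(B) > 0 and all λ ∈ (0,1), μ_*(λA+(1−λ)B) ≥ (λ·μ(A)^q + (1−λ)·μ(B)^q)^{1/q}. -/
open MeasureTheory Set Filter
open scoped Pointwise ENNReal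

/-- The inner measure induced by a measure `μ`:
`μ_*(S) = sup {μ(F) : F ⊆ S Borel}`. -/
noncomputable def innerMeasure {α : Type*} [MeasurableSpace α] (μ : Measure α) (S : Set α) :
    ℝ≥0∞ :=
  ⨆ (F : Set α) (_ : MeasurableSet F) (_ : F ⊆ S), μ F

/-! On the line, rescale `f` and `g` to have the same supremum. A superlevel set `{h > t}` then
contains `l • {f > t} + (1 - l) • {g > t}` with both summands nonempty or both empty, so the
one-dimensional Brunn–Minkowski inequality and the layer-cake formula bound the integral of `h`
below by the arithmetic mean of the integrals of `f` and `g`; undoing the rescaling costs one use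
of Hölder's inequality. If `p` is the exponent of the pointwise inequality and `q` that of the
integrated one, then `1 / q = 1 / p + 1`. By Fubini the inequality for a product measure comes from
applying the inequality of one factor on each fibre and that of the other to the marginals, so the
shifts of `1 / p` add up, and `ℝⁿ` has shift `n`. For measures of sets, take `f`, `g` and `h` to be
`w` cut off to compact sets `K ⊆ A`, `L ⊆ B` and to `l • K + (1 - l) • L`, and exhaust `A` and `B`.
-/

section PowerMean

/-- The weighted power mean `(l a ^ p + (1 - l) b ^ p) ^ (1 / p)` of exponent `p ≠ 0`, taken in
`[0, ∞]`; a vanishing argument makes it `0` when `p < 0`. -/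
noncomputable def powerMean (p l : ℝ) (a b : ℝ≥0∞) : ℝ≥0∞ :=
  (ENNReal.ofReal l * a ^ p + ENNReal.ofReal (1 - l) * b ^ p) ^ (1 / p)

theorem ennreal_rpow_antitone {z : ℝ} (hz : z ≤ 0) : Antitone fun x : ℝ≥0∞ => x ^ z := by
  intro x y hxy
  simpa only [ENNReal.rpow_neg, ENNReal.inv_le_inv, neg_neg] using
    ENNReal.inv_le_inv.2 (ENNReal.rpow_le_rpow hxy (neg_nonneg.2 hz))

variable {p l : ℝ} {a a' b b' c d s : ℝ≥0∞}

theorem powerMean_mono (p l : ℝ) (ha : a ≤ a') (hb : b ≤ b') :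
    powerMean p l a b ≤ powerMean p l a' b' := by
  rcases le_total p 0 with hp | hp
  · refine ennreal_rpow_antitone (one_div_nonpos.2 hp) ?_
    gcongr ENNReal.ofReal l * ?_ + ENNReal.ofReal (1 - l) * ?_
    exacts [ennreal_rpow_antitone hp ha, ennreal_rpow_antitone hp hb]
  · unfold powerMean
    gcongr

theorem powerMean_mul_left (hp : p ≠ 0) (hs₀ : s ≠ 0) (hs : s ≠ ∞) (a b : ℝ≥0∞) :
    powerMean p l (s * a) (s * b) = s * powerMean p l a b := by
  have mul_rpow (x : ℝ≥0∞) : (s * x) ^ p = s ^ p * x ^ p := by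
    simp [ENNReal.mul_rpow_eq_ite, hs₀, hs]
  have hsp₀ : s ^ p ≠ 0 := by simp [ENNReal.rpow_eq_zero_iff, hs₀, hs]
  have hsp : s ^ p ≠ ∞ := by simp [ENNReal.rpow_eq_top_iff, hs₀, hs]
  rw [powerMean, mul_rpow, mul_rpow, mul_left_comm, mul_left_comm (ENNReal.ofReal (1 - l)),
    ← mul_add, ENNReal.mul_rpow_eq_ite, one_div, ENNReal.rpow_rpow_inv hp]
  simp [hsp₀, hsp, powerMean]

theorem powerMean_ofReal {x y : ℝ} (hl : l ∈ Ioo 0 1) (hx : 0 < x) (hy : 0 < y) :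
    powerMean p l (ENNReal.ofReal x) (ENNReal.ofReal y) =
      ENNReal.ofReal ((l * x ^ p + (1 - l) * y ^ p) ^ (1 / p)) := by
  have hl₀ : 0 < l := hl.1
  have hl₁ : 0 < 1 - l := sub_pos.2 hl.2
  rw [powerMean, ENNReal.ofReal_rpow_of_pos hx, ENNReal.ofReal_rpow_of_pos hy,
    ← ENNReal.ofReal_mul hl₀.le, ← ENNReal.ofReal_mul hl₁.le,
    ← ENNReal.ofReal_add (by positivity) (by positivity),
    ENNReal.ofReal_rpow_of_pos (by positivity)]

theorem powerMean_ne_zero (hl : l ∈ Ioo 0 1) (ha₀ : a ≠ 0) (ha : a ≠ ∞) (hb₀ : b ≠ 0)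
    (hb : b ≠ ∞) : powerMean p l a b ≠ 0 := by
  have hx := ENNReal.toReal_pos ha₀ ha
  have hy := ENNReal.toReal_pos hb₀ hb
  have hl₀ : 0 < l := hl.1
  have hl₁ : 0 < 1 - l := sub_pos.2 hl.2
  rw [← ENNReal.ofReal_toReal ha, ← ENNReal.ofReal_toReal hb, powerMean_ofReal hl hx hy]
  exact (ENNReal.ofReal_pos.2 (by positivity)).ne'

theorem powerMean_ne_top (hl : l ∈ Ioo 0 1) (ha₀ : a ≠ 0) (ha : a ≠ ∞) (hb₀ : b ≠ 0)
    (hb : b ≠ ∞) : powerMean p l a b ≠ ∞ := by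
  rw [← ENNReal.ofReal_toReal ha, ← ENNReal.ofReal_toReal hb,
    powerMean_ofReal hl (ENNReal.toReal_pos ha₀ ha) (ENNReal.toReal_pos hb₀ hb)]
  exact ENNReal.ofReal_ne_top

theorem continuous_powerMean (p l : ℝ) :
    Continuous fun z : ℝ≥0∞ × ℝ≥0∞ => powerMean p l z.1 z.2 := by
  have rpow_continuous (r : ℝ) : Continuous fun x : ℝ≥0∞ => x ^ r :=
    ENNReal.continuous_rpow_const
  exact (rpow_continuous _).comp <|
    ((ENNReal.continuous_const_mul ENNReal.ofReal_ne_top).comp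
        ((rpow_continuous p).comp continuous_fst)).add
      ((ENNReal.continuous_const_mul ENNReal.ofReal_ne_top).comp
        ((rpow_continuous p).comp continuous_snd))

theorem powerMean_le_of_forall_lt (ha : a ≠ 0) (hb : b ≠ 0)
    (h : ∀ a' < a, ∀ b' < b, powerMean p l a' b' ≤ c) : powerMean p l a b ≤ c := by
  obtain ⟨u, -, hu, hua⟩ := exists_seq_strictMono_tendsto' (pos_iff_ne_zero.2 ha)
  obtain ⟨v, -, hv, hvb⟩ := exists_seq_strictMono_tendsto' (pos_iff_ne_zero.2 hb)
  exact le_of_tendsto'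
    (((continuous_powerMean p l).tendsto (a, b)).comp (hua.prodMk_nhds hvb))
    fun k => h _ (hu k).2 _ (hv k).2

theorem powerMean_mul_min_div_le (hp : p ≠ 0) (ha₀ : a ≠ 0) (ha : a ≠ ∞) (hb₀ : b ≠ 0)
    (hb : b ≠ ∞) (hc₀ : c ≠ 0) (hc : c ≠ ∞) (hd₀ : d ≠ 0) :
    powerMean p l a b * min (c / a) (d / b) ≤ powerMean p l c d := by
  have hs₀ : min (c / a) (d / b) ≠ 0 :=
    (lt_min (ENNReal.div_pos hc₀ ha) (ENNReal.div_pos hd₀ hb)).ne'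
  have hs : min (c / a) (d / b) ≠ ∞ :=
    ne_top_of_le_ne_top (ENNReal.div_ne_top hc ha₀) (min_le_left _ _)
  rw [mul_comm, ← powerMean_mul_left hp hs₀ hs]
  refine powerMean_mono p l ?_ ?_
  · exact (ENNReal.le_div_iff_mul_le (.inl ha₀) (.inl ha)).1 (min_le_left _ _)
  · exact (ENNReal.le_div_iff_mul_le (.inl hb₀) (.inl hb)).1 (min_le_right _ _)

theorem weighted_rpow_mul_rpow_add_le {s t : ℝ} (hs : 0 ≤ s) (ht : 0 ≤ t) (hst : s + t = 1)
    (u v a b c d : ℝ≥0∞) :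
    u * (a ^ s * c ^ t) + v * (b ^ s * d ^ t) ≤ (u * a + v * b) ^ s * (u * c + v * d) ^ t := by
  simpa only [lintegral_add_measure, lintegral_smul_measure, lintegral_dirac, smul_eq_mul,
      cond_true, cond_false] using
    ENNReal.lintegral_mul_norm_pow_le (μ := u • Measure.dirac true + v • Measure.dirac false)
      (f := fun i => cond i a b) (g := fun i => cond i c d)
      (measurable_of_finite _).aemeasurable (measurable_of_finite _).aemeasurable hs ht hst

theorem powerMean_mul_le_of_pos (hp : 0 < p) (l : ℝ) (a b c d : ℝ≥0∞) :
    powerMean (p / (1 + p)) l (a * c) (b * d) ≤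
      powerMean p l a b * (ENNReal.ofReal l * c + ENNReal.ofReal (1 - l) * d) := by
  have : 0 < 1 + p := by positivity
  set q := p / (1 + p) with hq
  have hq₀ : 0 < q := by positivity
  have mul_rpow (x y : ℝ≥0∞) : (x * y) ^ q = (x ^ p) ^ (1 / (1 + p)) * y ^ q := by
    rw [ENNReal.mul_rpow_of_nonneg _ _ hq₀.le, ← ENNReal.rpow_mul, mul_one_div]
  have holder := weighted_rpow_mul_rpow_add_le (s := 1 / (1 + p)) (t := q) (by positivity) hq₀.le
    (by rw [hq]; field_simp) (ENNReal.ofReal l) (ENNReal.ofReal (1 - l)) (a ^ p) (b ^ p) c d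
  calc powerMean q l (a * c) (b * d)
      ≤ ((ENNReal.ofReal l * a ^ p + ENNReal.ofReal (1 - l) * b ^ p) ^ (1 / (1 + p)) *
          (ENNReal.ofReal l * c + ENNReal.ofReal (1 - l) * d) ^ q) ^ (1 / q) := by
        rw [powerMean, mul_rpow, mul_rpow]
        gcongr
    _ = powerMean p l a b * (ENNReal.ofReal l * c + ENNReal.ofReal (1 - l) * d) := by
        rw [ENNReal.mul_rpow_of_nonneg _ _ (by positivity), ← ENNReal.rpow_mul,
          ← ENNReal.rpow_mul, mul_one_div_cancel hq₀.ne', ENNReal.rpow_one, powerMean]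
        congr 2
        rw [hq]
        field_simp

-- Hölder's inequality bounds `l a ^ p + (1 - l) b ^ p` after writing `a ^ p` as
-- `((a c) ^ q) ^ (1 + p) * c ^ (-p)`, where `q = p / (1 + p)`; the negative power `1 / p` then
-- reverses the inequality.
theorem powerMean_mul_le_of_neg (hp : p < 0) (hp₁ : 0 < 1 + p) (hl : l ∈ Ioo 0 1) (a b : ℝ≥0∞)
    (hc₀ : c ≠ 0) (hc : c ≠ ∞) (hd₀ : d ≠ 0) (hd : d ≠ ∞) :
    powerMean (p / (1 + p)) l (a * c) (b * d) ≤
      powerMean p l a b * (ENNReal.ofReal l * c + ENNReal.ofReal (1 - l) * d) := by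
  set q := p / (1 + p) with hq
  set T := ENNReal.ofReal l * (a * c) ^ q + ENNReal.ofReal (1 - l) * (b * d) ^ q
  set D := ENNReal.ofReal l * c + ENNReal.ofReal (1 - l) * d with hD
  have hD₀ : D ≠ 0 := by simp [hD, hc₀, hl.1]
  have hD_top : D ≠ ∞ := by simp [hD, ENNReal.mul_eq_top, hc, hd]
  have rpow_eq {x y : ℝ≥0∞} (hy₀ : y ≠ 0) (hy : y ≠ ∞) :
      x ^ p = ((x * y) ^ q) ^ (1 + p) * y ^ (-p) := by
    have hyp₀ : y ^ p ≠ 0 := by simp [ENNReal.rpow_eq_zero_iff, hy₀, hy]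
    have hyp : y ^ p ≠ ∞ := by simp [ENNReal.rpow_eq_top_iff, hy₀, hy]
    rw [← ENNReal.rpow_mul, hq, div_mul_cancel₀ _ hp₁.ne', ENNReal.mul_rpow_eq_ite,
      if_neg (by simp [hy₀, hy]), ENNReal.rpow_neg, mul_assoc, ENNReal.mul_inv_cancel hyp₀ hyp,
      mul_one]
  have holder : ENNReal.ofReal l * a ^ p + ENNReal.ofReal (1 - l) * b ^ p ≤
      T ^ (1 + p) * D ^ (-p) := by
    rw [rpow_eq hc₀ hc, rpow_eq hd₀ hd]
    exact weighted_rpow_mul_rpow_add_le hp₁.le (neg_nonneg.2 hp.le) (by ring) _ _ _ _ _ _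
  calc powerMean q l (a * c) (b * d)
      = (T ^ (1 + p) * D ^ (-p)) ^ (1 / p) * D := by
        have hDp₀ : D ^ (-p) ≠ 0 := by simp [ENNReal.rpow_eq_zero_iff, hD₀, hD_top]
        have hDp : D ^ (-p) ≠ ∞ := by simp [ENNReal.rpow_eq_top_iff, hD₀, hD_top]
        rw [ENNReal.mul_rpow_eq_ite, if_neg (by simp [hDp₀, hDp]), ← ENNReal.rpow_mul,
          ← ENNReal.rpow_mul, neg_mul, mul_one_div_cancel hp.ne, ENNReal.rpow_neg_one, mul_assoc,
          ENNReal.inv_mul_cancel hD₀ hD_top, mul_one, mul_one_div, hq, powerMean, one_div_div]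
    _ ≤ powerMean p l a b * D := by
        gcongr
        exact ennreal_rpow_antitone (one_div_neg.2 hp).le holder

theorem powerMean_mul_le (hp : p ≠ 0) (hp₁ : 0 < 1 + p) (hl : l ∈ Ioo 0 1) (a b : ℝ≥0∞)
    (hc₀ : c ≠ 0) (hc : c ≠ ∞) (hd₀ : d ≠ 0) (hd : d ≠ ∞) :
    powerMean (p / (1 + p)) l (a * c) (b * d) ≤
      powerMean p l a b * (ENNReal.ofReal l * c + ENNReal.ofReal (1 - l) * d) := by
  rcases hp.lt_or_gt with hp | hp
  · exact powerMean_mul_le_of_neg hp hp₁ hl a b hc₀ hc hd₀ hd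
  · exact powerMean_mul_le_of_pos hp l a b c d

end PowerMean

section Line

theorem lintegral_eq_lintegral_meas_ofReal_lt {α : Type*} [MeasurableSpace α] (μ : Measure α)
    [SFinite μ] {f : α → ℝ≥0∞} (hf : Measurable f) :
    ∫⁻ x, f x ∂μ = ∫⁻ t in Ioi (0 : ℝ), μ {x | ENNReal.ofReal t < f x} := by
  have volume_section (y : ℝ≥0∞) :
      volume.restrict (Ioi (0 : ℝ)) {t | ENNReal.ofReal t < y} = y := by
    rw [Measure.restrict_apply (measurableSet_lt ENNReal.measurable_ofReal measurable_const)]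
    induction y with
    | top => simp [ENNReal.ofReal_lt_top]
    | coe y =>
      have : {t : ℝ | ENNReal.ofReal t < y} ∩ Ioi 0 = Ioo 0 (y : ℝ) := by
        ext t
        simp +contextual [and_comm, ENNReal.ofReal_lt_coe_iff, le_of_lt]
      simp [this]
  have hS : MeasurableSet {z : α × ℝ | ENNReal.ofReal z.2 < f z.1} :=
    measurableSet_lt (ENNReal.measurable_ofReal.comp measurable_snd) (hf.comp measurable_fst)
  calc ∫⁻ x, f x ∂μ
      = (μ.prod (volume.restrict (Ioi (0 : ℝ)))) {z | ENNReal.ofReal z.2 < f z.1} := by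
        simp only [Measure.prod_apply hS, preimage_ofPred_eq, volume_section]
    _ = ∫⁻ t in Ioi (0 : ℝ), μ {x | ENNReal.ofReal t < f x} := Measure.prod_apply_symm hS

variable {G : Type*} [AddCommGroup G] [LinearOrder G] [IsOrderedAddMonoid G] [MeasurableSpace G]
  {μ : Measure G} [μ.IsAddLeftInvariant] [NullSingletonClass μ]

theorem measure_add_measure_le_of_isGreatest_of_isLeast [MeasurableAdd G] {A B : Set G} {a b : G}
    (ha : IsGreatest A a) (hb : IsLeast B b) (hB : MeasurableSet B) :
    μ A + μ B ≤ μ (A + B) := by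
  have subset : (b +ᵥ A) ∪ (a +ᵥ B) ⊆ A + B := by
    rintro _ (⟨x, hx, rfl⟩ | ⟨y, hy, rfl⟩)
    · simpa only [vadd_eq_add, add_comm b] using add_mem_add hx hb.1
    · exact add_mem_add ha.1 hy
  have disjoint : AEDisjoint μ (b +ᵥ A) (a +ᵥ B) := by
    refine measure_mono_null (t := {a + b}) ?_ (measure_singleton _)
    rintro _ ⟨⟨x, hx, rfl⟩, ⟨y, hy, hxy⟩⟩
    refine le_antisymm ?_ ?_
    · exact (add_le_add_right (ha.2 hx) b).trans_eq (add_comm b a)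
    · exact (add_le_add_right (hb.2 hy) a).trans_eq hxy
  calc μ A + μ B = μ ((b +ᵥ A) ∪ (a +ᵥ B)) := by
        rw [measure_union₀ (hB.const_vadd a).nullMeasurableSet disjoint, measure_vadd, measure_vadd]
    _ ≤ μ (A + B) := measure_mono subset

theorem measure_add_measure_le_measure_add [TopologicalSpace G] [OrderTopology G] [BorelSpace G]
    [μ.InnerRegular] {A B : Set G} (hA : MeasurableSet A) (hB : MeasurableSet B)
    (hA_nonempty : A.Nonempty) (hB_nonempty : B.Nonempty) : μ A + μ B ≤ μ (A + B) := by
  obtain ⟨x, hx⟩ := hA_nonempty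
  obtain ⟨y, hy⟩ := hB_nonempty
  rw [hA.measure_eq_iSup_isCompact, hB.measure_eq_iSup_isCompact]
  simp only [iSup_and']
  refine ENNReal.biSup_add_biSup_le' ⟨∅, empty_subset A, isCompact_empty⟩
    ⟨∅, empty_subset B, isCompact_empty⟩ fun K ⟨hKA, hK⟩ L ⟨hLB, hL⟩ => ?_
  obtain ⟨a, ha⟩ := (hK.insert x).exists_isGreatest (insert_nonempty x K)
  obtain ⟨b, hb⟩ := (hL.insert y).exists_isLeast (insert_nonempty y L)
  calc μ K + μ L ≤ μ (insert x K) + μ (insert y L) := by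
        gcongr <;> exact subset_insert _ _
    _ ≤ μ (insert x K + insert y L) :=
        measure_add_measure_le_of_isGreatest_of_isLeast ha hb (hL.insert y).measurableSet
    _ ≤ μ (A + B) := measure_mono <|
        add_subset_add (insert_subset hx hKA) (insert_subset hy hLB)

variable {l : ℝ} {f g h : ℝ → ℝ≥0∞}

-- With equal suprema, each superlevel set of `f` is empty exactly when that of `g` is, so the
-- one-dimensional Brunn–Minkowski inequality applies at every level.
theorem lintegral_add_lintegral_le_of_min_le (hl : l ∈ Ioo 0 1) (hf : Measurable f)
    (hg : Measurable g) (hh : Measurable h) (hfg : ⨆ x, f x = ⨆ x, g x)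
    (H : ∀ x y, f x ≠ 0 → g y ≠ 0 → min (f x) (g y) ≤ h (l * x + (1 - l) * y)) :
    ENNReal.ofReal l * (∫⁻ x, f x) + ENNReal.ofReal (1 - l) * ∫⁻ x, g x ≤ ∫⁻ x, h x := by
  have measurable_meas (F : ℝ → ℝ≥0∞) :
      Measurable fun t : ℝ => volume {x | ENNReal.ofReal t < F x} :=
    Antitone.measurable fun s t hst => measure_mono fun x (hx : ENNReal.ofReal t < F x) =>
      (ENNReal.ofReal_le_ofReal hst).trans_lt hx
  rw [lintegral_eq_lintegral_meas_ofReal_lt _ hf, lintegral_eq_lintegral_meas_ofReal_lt _ hg,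
    lintegral_eq_lintegral_meas_ofReal_lt _ hh, ← lintegral_const_mul _ (measurable_meas f),
    ← lintegral_const_mul _ (measurable_meas g),
    ← lintegral_add_left ((measurable_meas f).const_mul _)]
  refine lintegral_mono fun t => ?_
  have superlevel_subset : l • {x | ENNReal.ofReal t < f x} +
      (1 - l) • {x | ENNReal.ofReal t < g x} ⊆ {x | ENNReal.ofReal t < h x} := by
    rintro _ ⟨_, ⟨x, hx, rfl⟩, _, ⟨y, hy, rfl⟩, rfl⟩
    exact (lt_min hx hy).trans_le (H x y (ne_zero_of_lt hx) (ne_zero_of_lt hy))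
  have superlevel_nonempty {F : ℝ → ℝ≥0∞} :
      {x | ENNReal.ofReal t < F x}.Nonempty ↔ ENNReal.ofReal t < ⨆ x, F x := by
    rw [lt_iSup_iff]
    rfl
  by_cases ht : ENNReal.ofReal t < ⨆ x, f x
  · calc ENNReal.ofReal l * volume {x | ENNReal.ofReal t < f x} +
          ENNReal.ofReal (1 - l) * volume {x | ENNReal.ofReal t < g x}
        = volume (l • {x | ENNReal.ofReal t < f x}) +
            volume ((1 - l) • {x | ENNReal.ofReal t < g x}) := by
          simp [Measure.addHaar_smul, abs_of_pos hl.1, abs_of_pos (sub_pos.2 hl.2)]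
      _ ≤ volume (l • {x | ENNReal.ofReal t < f x} +
            (1 - l) • {x | ENNReal.ofReal t < g x}) :=
          measure_add_measure_le_measure_add
            ((measurableSet_lt measurable_const hf).const_smul₀ l)
            ((measurableSet_lt measurable_const hg).const_smul₀ (1 - l))
            (superlevel_nonempty.2 ht).smul_set (superlevel_nonempty.2 (hfg ▸ ht)).smul_set
      _ ≤ volume {x | ENNReal.ofReal t < h x} := measure_mono superlevel_subset
  · have hf_empty := not_nonempty_iff_eq_empty.1 (mt superlevel_nonempty.1 ht)
    have hg_empty := not_nonempty_iff_eq_empty.1 (mt superlevel_nonempty.1 (hfg ▸ ht))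
    simp [hf_empty, hg_empty]

theorem iSup_ne_zero_of_lintegral_ne_zero {α : Type*} [MeasurableSpace α] {μ : Measure α}
    {f : α → ℝ≥0∞} (hf : ∫⁻ x, f x ∂μ ≠ 0) : ⨆ x, f x ≠ 0 := fun h₀ =>
  hf (by simp only [ENNReal.iSup_eq_zero.1 h₀, lintegral_zero])

-- Dividing `f`, `g` and `h` by `⨆ x, f x`, `⨆ x, g x` and the power mean of these suprema reduces
-- the claim to two functions of supremum `1` and their minimum.
theorem powerMean_iSup_mul_le_lintegral {p : ℝ} (hp : p ≠ 0) (hl : l ∈ Ioo 0 1)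
    (hf : Measurable f) (hg : Measurable g) (hh : Measurable h) (hf₀ : ⨆ x, f x ≠ 0)
    (hf_top : ⨆ x, f x ≠ ∞) (hg₀ : ⨆ x, g x ≠ 0) (hg_top : ⨆ x, g x ≠ ∞)
    (H : ∀ x y, f x ≠ 0 → g y ≠ 0 → powerMean p l (f x) (g y) ≤ h (l * x + (1 - l) * y)) :
    powerMean p l (⨆ x, f x) (⨆ x, g x) *
      (ENNReal.ofReal l * ((∫⁻ x, f x) / ⨆ x, f x) +
        ENNReal.ofReal (1 - l) * ((∫⁻ x, g x) / ⨆ x, g x)) ≤ ∫⁻ x, h x := by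
  set a := ⨆ x, f x with ha
  set b := ⨆ x, g x with hb
  set M := powerMean p l a b
  have hM₀ : M ≠ 0 := powerMean_ne_zero hl hf₀ hf_top hg₀ hg_top
  have hM : M ≠ ∞ := powerMean_ne_top hl hf₀ hf_top hg₀ hg_top
  have lintegral_div {F : ℝ → ℝ≥0∞} (hF : Measurable F) (c : ℝ≥0∞) :
      ∫⁻ x, F x / c = (∫⁻ x, F x) / c := by
    simp only [div_eq_mul_inv, lintegral_mul_const _ hF]
  rw [mul_comm, ← ENNReal.le_div_iff_mul_le (.inl hM₀) (.inl hM), ← lintegral_div hf,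
    ← lintegral_div hg, ← lintegral_div hh]
  refine lintegral_add_lintegral_le_of_min_le hl (hf.div_const a) (hg.div_const b)
    (hh.div_const M) ?_ fun x y hx hy => ?_
  · rw [← ENNReal.iSup_div, ← ENNReal.iSup_div, ← ha, ← hb, ENNReal.div_self hf₀ hf_top,
      ENNReal.div_self hg₀ hg_top]
  · have hfx : f x ≠ 0 := (ENNReal.div_ne_zero.1 hx).1
    have hgy : g y ≠ 0 := (ENNReal.div_ne_zero.1 hy).1
    have hfx_top : f x ≠ ∞ := ne_top_of_le_ne_top hf_top (le_iSup f x)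
    rw [ENNReal.le_div_iff_mul_le (.inl hM₀) (.inl hM), mul_comm]
    exact (powerMean_mul_min_div_le hp hf₀ hf_top hg₀ hg_top hfx hfx_top hgy).trans
      (H x y hfx hgy)

theorem powerMean_lintegral_le_of_bounded {p : ℝ} (hp : p ≠ 0) (hp₁ : 0 < 1 + p)
    (hl : l ∈ Ioo 0 1) (hf : Measurable f) (hg : Measurable g) (hh : Measurable h)
    (hf_top : ⨆ x, f x ≠ ∞) (hg_top : ⨆ x, g x ≠ ∞)
    (H : ∀ x y, f x ≠ 0 → g y ≠ 0 → powerMean p l (f x) (g y) ≤ h (l * x + (1 - l) * y))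
    (hf₀ : ∫⁻ x, f x ≠ 0) (hg₀ : ∫⁻ x, g x ≠ 0) :
    powerMean (p / (1 + p)) l (∫⁻ x, f x) (∫⁻ x, g x) ≤ ∫⁻ x, h x := by
  have ha₀ := iSup_ne_zero_of_lintegral_ne_zero hf₀
  have hb₀ := iSup_ne_zero_of_lintegral_ne_zero hg₀
  have normalized := powerMean_iSup_mul_le_lintegral hp hl hf hg hh ha₀ hf_top hb₀ hg_top H
  set a := ⨆ x, f x
  set b := ⨆ x, g x
  rcases eq_or_ne (∫⁻ x, h x) ∞ with h_top | h_top
  · exact h_top ▸ le_top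
  have mean_ne_top := ENNReal.add_ne_top.1 <|
    (ENNReal.lt_top_of_mul_ne_top_right (ne_top_of_le_ne_top h_top normalized)
      (powerMean_ne_zero hl ha₀ hf_top hb₀ hg_top)).ne
  have hfa : (∫⁻ x, f x) / a ≠ ∞ :=
    (ENNReal.lt_top_of_mul_ne_top_right mean_ne_top.1 (by simpa using hl.1)).ne
  have hgb : (∫⁻ x, g x) / b ≠ ∞ :=
    (ENNReal.lt_top_of_mul_ne_top_right mean_ne_top.2 (by simpa using hl.2)).ne
  calc powerMean (p / (1 + p)) l (∫⁻ x, f x) (∫⁻ x, g x)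
      = powerMean (p / (1 + p)) l (a * ((∫⁻ x, f x) / a)) (b * ((∫⁻ x, g x) / b)) := by
        rw [ENNReal.mul_div_cancel ha₀ hf_top, ENNReal.mul_div_cancel hb₀ hg_top]
    _ ≤ powerMean p l a b * (ENNReal.ofReal l * ((∫⁻ x, f x) / a) +
          ENNReal.ofReal (1 - l) * ((∫⁻ x, g x) / b)) :=
        powerMean_mul_le hp hp₁ hl a b (ENNReal.div_ne_zero.2 ⟨hf₀, hf_top⟩) hfa
          (ENNReal.div_ne_zero.2 ⟨hg₀, hg_top⟩) hgb
    _ ≤ ∫⁻ x, h x := normalized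

theorem exists_simpleFunc_le_lt_lintegral {α : Type*} [MeasurableSpace α] {μ : Measure α}
    {f : α → ℝ≥0∞} {c : ℝ≥0∞} (hc : c < ∫⁻ x, f x ∂μ) :
    ∃ φ : SimpleFunc α NNReal, (∀ x, (φ x : ℝ≥0∞) ≤ f x) ∧ c < ∫⁻ x, (φ x : ℝ≥0∞) ∂μ := by
  rw [lintegral_eq_nnreal] at hc
  obtain ⟨φ, hc⟩ := lt_iSup_iff.1 hc
  obtain ⟨hφ, hc⟩ := lt_iSup_iff.1 hc
  refine ⟨φ, hφ, hc.trans_eq ?_⟩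
  rw [← SimpleFunc.lintegral_eq_lintegral]
  rfl

theorem powerMean_lintegral_le {p : ℝ} (hp : p ≠ 0) (hp₁ : 0 < 1 + p) (hl : l ∈ Ioo 0 1)
    (hh : Measurable h)
    (H : ∀ x y, f x ≠ 0 → g y ≠ 0 → powerMean p l (f x) (g y) ≤ h (l * x + (1 - l) * y))
    (hf₀ : ∫⁻ x, f x ≠ 0) (hg₀ : ∫⁻ x, g x ≠ 0) :
    powerMean (p / (1 + p)) l (∫⁻ x, f x) (∫⁻ x, g x) ≤ ∫⁻ x, h x := by
  have iSup_ne_top (φ : SimpleFunc ℝ NNReal) : ⨆ x, (φ x : ℝ≥0∞) ≠ ∞ := by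
    obtain ⟨C, hC⟩ := φ.exists_forall_le
    exact ne_top_of_le_ne_top ENNReal.coe_ne_top (iSup_le fun x => ENNReal.coe_le_coe.2 (hC x))
  refine powerMean_le_of_forall_lt hf₀ hg₀ fun a ha b hb => ?_
  obtain ⟨φ, hφf, hφ⟩ := exists_simpleFunc_le_lt_lintegral ha
  obtain ⟨ψ, hψg, hψ⟩ := exists_simpleFunc_le_lt_lintegral hb
  refine (powerMean_mono _ _ hφ.le hψ.le).trans ?_
  refine powerMean_lintegral_le_of_bounded hp hp₁ hl φ.measurable.coe_nnreal_ennreal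
    ψ.measurable.coe_nnreal_ennreal hh (iSup_ne_top φ) (iSup_ne_top ψ) (fun x y hx hy => ?_)
    (ne_zero_of_lt hφ) (ne_zero_of_lt hψ)
  exact (powerMean_mono p l (hφf x) (hψg y)).trans
    (H x y (ne_bot_of_le_ne_bot hx (hφf x)) (ne_bot_of_le_ne_bot hy (hψg y)))

end Line

section Dimension

/-- The Borell–Brascamp–Lieb inequality for `μ` in dimension `d`: if `h (l • x + (1 - l) • y)`
dominates the power mean of `f x` and `g y` of exponent `p > -1 / d`, then the integral of `h`
dominates the power mean of the integrals of `f` and `g` of exponent `p / (1 + d * p)`, which is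
the `q` with `1 / q = 1 / p + d`. -/
def BorellBrascampLieb {E : Type*} [AddCommGroup E] [Module ℝ E] [MeasurableSpace E]
    (μ : Measure E) (d : ℕ) : Prop :=
  ∀ ⦃p l : ℝ⦄, p ≠ 0 → 0 < 1 + d * p → l ∈ Ioo 0 1 → ∀ ⦃f g h : E → ℝ≥0∞⦄,
    Measurable f → Measurable g → Measurable h →
    (∀ x y, f x ≠ 0 → g y ≠ 0 → powerMean p l (f x) (g y) ≤ h (l • x + (1 - l) • y)) →
    ∫⁻ x, f x ∂μ ≠ 0 → ∫⁻ x, g x ∂μ ≠ 0 →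
    powerMean (p / (1 + d * p)) l (∫⁻ x, f x ∂μ) (∫⁻ x, g x ∂μ) ≤ ∫⁻ x, h x ∂μ

namespace BorellBrascampLieb

variable {E F : Type*} [AddCommGroup E] [Module ℝ E] [MeasurableSpace E] [AddCommGroup F]
  [Module ℝ F] [MeasurableSpace F] {μ : Measure E} {ν : Measure F} {d e : ℕ}

theorem volume_real : BorellBrascampLieb (volume : Measure ℝ) 1 := by
  intro p l hp hp₁ hl f g h _ _ hh H hf₀ hg₀
  rw [Nat.cast_one, one_mul] at hp₁ ⊢
  exact powerMean_lintegral_le hp hp₁ hl hh H hf₀ hg₀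

theorem dirac_zero : BorellBrascampLieb (Measure.dirac (0 : E)) 0 := by
  intro p l _ _ _ f g h hf hg hh H hf₀ hg₀
  rw [lintegral_dirac' _ hf] at hf₀ ⊢
  rw [lintegral_dirac' _ hg] at hg₀ ⊢
  rw [lintegral_dirac' _ hh]
  simpa using H 0 0 hf₀ hg₀

protected theorem prod [SFinite ν] (hμ : BorellBrascampLieb μ d) (hν : BorellBrascampLieb ν e) :
    BorellBrascampLieb (μ.prod ν) (d + e) := by
  intro p l hp hp₁ hl f g h hf hg hh H hf₀ hg₀
  have hpe : 0 < 1 + e * p := by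
    rcases hp.lt_or_gt with hp | hp
    · push_cast at hp₁
      linarith [mul_nonpos_of_nonneg_of_nonpos (Nat.cast_nonneg' (α := ℝ) d) hp.le]
    · positivity
  have one_add_eq : 1 + d * (p / (1 + e * p)) = (1 + (d + e : ℕ) * p) / (1 + e * p) := by
    rw [eq_div_iff hpe.ne', add_mul, mul_assoc, div_mul_cancel₀ _ hpe.ne']
    push_cast
    ring
  have exponent_eq : p / (1 + (d + e : ℕ) * p) =
      p / (1 + e * p) / (1 + d * (p / (1 + e * p))) := by
    rw [one_add_eq, div_div_div_cancel_right₀ hpe.ne']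
  rw [lintegral_prod _ hf.aemeasurable] at hf₀ ⊢
  rw [lintegral_prod _ hg.aemeasurable] at hg₀ ⊢
  rw [lintegral_prod _ hh.aemeasurable, exponent_eq]
  refine hμ (div_ne_zero hp hpe.ne') (one_add_eq ▸ div_pos hp₁ hpe) hl hf.lintegral_prod_right'
    hg.lintegral_prod_right' hh.lintegral_prod_right' (fun x x' hx hx' => ?_) hf₀ hg₀
  exact hν hp hpe hl (hf.comp measurable_prodMk_left) (hg.comp measurable_prodMk_left)
    (hh.comp measurable_prodMk_left) (fun y y' => H (x, y) (x', y')) hx hx'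

protected theorem map (hμ : BorellBrascampLieb μ d) {T : E →ₗ[ℝ] F} (hT : Measurable T) :
    BorellBrascampLieb (μ.map T) d := by
  intro p l hp hp₁ hl f g h hf hg hh H hf₀ hg₀
  rw [lintegral_map hf hT] at hf₀ ⊢
  rw [lintegral_map hg hT] at hg₀ ⊢
  rw [lintegral_map hh hT]
  refine hμ hp hp₁ hl (hf.comp hT) (hg.comp hT) (hh.comp hT) (fun x y hx hy => ?_) hf₀ hg₀
  simpa only [map_add, map_smul] using H (T x) (T y) hx hy

protected theorem smul (hμ : BorellBrascampLieb μ d) {c : ℝ≥0∞} (hc₀ : c ≠ 0) (hc : c ≠ ∞) :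
    BorellBrascampLieb (c • μ) d := by
  intro p l hp hp₁ hl f g h hf hg hh H hf₀ hg₀
  simp only [lintegral_smul_measure, smul_eq_mul] at hf₀ hg₀ ⊢
  rw [powerMean_mul_left (div_ne_zero hp hp₁.ne') hc₀ hc]
  gcongr
  exact hμ hp hp₁ hl hf hg hh H (right_ne_zero_of_mul hf₀) (right_ne_zero_of_mul hg₀)

theorem volume_fin_fun (n : ℕ) : BorellBrascampLieb (volume : Measure (Fin n → ℝ)) n := by
  induction n with
  | zero =>
    rw [volume_pi, Measure.pi_of_empty _ 0]
    exact dirac_zero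
  | succ n ih =>
    have cons_eq : ⇑(MeasurableEquiv.piFinSuccAbove (fun _ : Fin (n + 1) => ℝ) 0).symm =
        (Fin.consLinearEquiv ℝ fun _ => ℝ).toLinearMap := by
      ext z i
      simp
    have cons := (volume_preserving_piFinSuccAbove (fun _ : Fin (n + 1) => ℝ) 0).symm
    have prod : BorellBrascampLieb (volume : Measure (ℝ × (Fin n → ℝ))) (n + 1) :=
      add_comm 1 n ▸ volume_real.prod ih
    rw [cons_eq] at cons
    exact cons.map_eq ▸ prod.map cons.measurable

theorem of_isAddHaarMeasure {E : Type*} [NormedAddCommGroup E] [NormedSpace ℝ E]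
    [FiniteDimensional ℝ E] [MeasurableSpace E] [BorelSpace E] (μ : Measure E)
    [μ.IsAddHaarMeasure] : BorellBrascampLieb μ (Module.finrank ℝ E) := by
  let L : (Fin (Module.finrank ℝ E) → ℝ) ≃L[ℝ] E :=
    ContinuousLinearEquiv.ofFinrankEq (Module.finrank_fin_fun ℝ)
  have := L.isAddHaarMeasure_map volume
  rw [Measure.isAddLeftInvariant_eq_smul μ (volume.map L)]
  exact ((volume_fin_fun _).map (T := L.toLinearMap) L.continuous.measurable).smul
    (ENNReal.coe_ne_zero.2 (Measure.addHaarScalarFactor_pos_of_isAddHaarMeasure _ _).ne')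
    ENNReal.coe_ne_top

theorem powerMean_withDensity_le (hμ : BorellBrascampLieb μ d) {p l : ℝ} (hp : p ≠ 0)
    (hp₁ : 0 < 1 + d * p) (hl : l ∈ Ioo 0 1) {w : E → ℝ≥0∞} (hw : Measurable w)
    (H : ∀ x y, w x ≠ 0 → w y ≠ 0 → powerMean p l (w x) (w y) ≤ w (l • x + (1 - l) • y))
    {A B C : Set E} (hA : MeasurableSet A) (hB : MeasurableSet B) (hC : MeasurableSet C)
    (hABC : l • A + (1 - l) • B ⊆ C) (hA₀ : μ.withDensity w A ≠ 0)
    (hB₀ : μ.withDensity w B ≠ 0) :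
    powerMean (p / (1 + d * p)) l (μ.withDensity w A) (μ.withDensity w B) ≤
      μ.withDensity w C := by
  rw [withDensity_apply _ hA, ← lintegral_indicator hA] at hA₀ ⊢
  rw [withDensity_apply _ hB, ← lintegral_indicator hB] at hB₀ ⊢
  rw [withDensity_apply _ hC, ← lintegral_indicator hC]
  refine hμ hp hp₁ hl (hw.indicator hA) (hw.indicator hB) (hw.indicator hC)
    (fun x y hx hy => ?_) hA₀ hB₀
  obtain ⟨hxA, hwx⟩ := indicator_apply_ne_zero.1 hx
  obtain ⟨hyB, hwy⟩ := indicator_apply_ne_zero.1 hy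
  rw [indicator_of_mem hxA, indicator_of_mem hyB, indicator_of_mem
    (hABC (add_mem_add (smul_mem_smul_set hxA) (smul_mem_smul_set hyB)))]
  exact H x y hwx hwy

end BorellBrascampLieb

end Dimension

section InnerMeasure

theorem le_innerMeasure {α : Type*} [MeasurableSpace α] {μ : Measure α} {F S : Set α}
    (hF : MeasurableSet F) (hFS : F ⊆ S) : μ F ≤ innerMeasure μ S :=
  le_iSup_of_le F (le_iSup₂_of_le hF hFS le_rfl)

theorem powerMean_le_innerMeasure_of_isCompact {E : Type*} [AddCommGroup E] [Module ℝ E]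
    [TopologicalSpace E] [ContinuousAdd E] [ContinuousConstSMul ℝ E] [T2Space E]
    [MeasurableSpace E] [BorelSpace E] {μ : Measure E} [μ.InnerRegular] {q l : ℝ}
    (H : ∀ K L : Set E, IsCompact K → IsCompact L → μ K ≠ 0 → μ L ≠ 0 →
      powerMean q l (μ K) (μ L) ≤ μ (l • K + (1 - l) • L))
    {A B : Set E} (hA : MeasurableSet A) (hB : MeasurableSet B) (hA₀ : μ A ≠ 0) (hB₀ : μ B ≠ 0) :
    powerMean q l (μ A) (μ B) ≤ innerMeasure μ (l • A + (1 - l) • B) := by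
  refine powerMean_le_of_forall_lt hA₀ hB₀ fun a ha b hb => ?_
  obtain ⟨K, hKA, hK, haK⟩ := hA.exists_lt_isCompact ha
  obtain ⟨L, hLB, hL, hbL⟩ := hB.exists_lt_isCompact hb
  calc powerMean q l a b ≤ powerMean q l (μ K) (μ L) := powerMean_mono q l haK.le hbL.le
    _ ≤ μ (l • K + (1 - l) • L) := H K L hK hL (ne_zero_of_lt haK) (ne_zero_of_lt hbL)
    _ ≤ innerMeasure μ (l • A + (1 - l) • B) :=
        le_innerMeasure ((hK.smul l).add (hL.smul (1 - l))).measurableSet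
          (add_subset_add (smul_set_mono hKA) (smul_set_mono hLB))

end InnerMeasure

theorem one_add_mul_pos_of_mem {n : ℕ} {p : ℝ} (hp : p ∈ Ioo (-(1 / (n : ℝ))) 0 ∪ Ioi 0) :
    0 < 1 + n * p := by
  rcases hp with ⟨hp, hp₀⟩ | hp
  · have hn : (0 : ℝ) < n := one_div_pos.1 (neg_neg_iff_pos.1 (hp.trans hp₀))
    rw [neg_lt, lt_div_iff₀ hn] at hp
    linarith
  · have : 0 < p := hp
    positivity

theorem eq_div_one_add_mul {p q d : ℝ} (hp : p ≠ 0) (h : 1 / q = 1 / p + d) :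
    q = p / (1 + d * p) := by
  rw [← one_div_one_div q, h, div_add' _ _ _ hp, one_div_div]

theorem stmt0_general {E : Type*} [NormedAddCommGroup E] [NormedSpace ℝ E]
    [FiniteDimensional ℝ E] [MeasurableSpace E] [BorelSpace E] {ν : Measure E}
    [ν.IsAddHaarMeasure] {p q lam : ℝ}
    (hp : p ∈ Ioo (-(1 / (Module.finrank ℝ E : ℝ))) 0 ∪ Ioi 0)
    (hq : 1 / q = 1 / p + Module.finrank ℝ E) (hlam : lam ∈ Ioo 0 1) {w : E → ℝ}
    (hwm : Measurable w)
    (hwconc : ∀ x y, 0 < w x → 0 < w y →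
      (lam * w x ^ p + (1 - lam) * w y ^ p) ^ (1 / p) ≤ w (lam • x + (1 - lam) • y))
    {μ : Measure E} (hμ : μ = ν.withDensity fun x => ENNReal.ofReal (w x)) {A B : Set E}
    (hA : MeasurableSet A) (hB : MeasurableSet B) (hAB : 0 < μ A * μ B) :
    (ENNReal.ofReal lam * μ A ^ q + ENNReal.ofReal (1 - lam) * μ B ^ q) ^ (1 / q) ≤
      innerMeasure μ (lam • A + (1 - lam) • B) := by
  have hp₀ : p ≠ 0 := hp.elim (·.2.ne) fun hp => (mem_Ioi.1 hp).ne'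
  have ofReal_w_concave (x y : E) (hx : ENNReal.ofReal (w x) ≠ 0)
      (hy : ENNReal.ofReal (w y) ≠ 0) :
      powerMean p lam (ENNReal.ofReal (w x)) (ENNReal.ofReal (w y)) ≤
        ENNReal.ofReal (w (lam • x + (1 - lam) • y)) := by
    rw [ENNReal.ofReal_ne_zero_iff] at hx hy
    rw [powerMean_ofReal hlam hx hy]
    exact ENNReal.ofReal_le_ofReal (hwconc x y hx hy)
  have : ProperSpace E := FiniteDimensional.proper ℝ E
  have : SigmaFinite μ := hμ ▸ SigmaFinite.withDensity_ofReal w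
  refine powerMean_le_innerMeasure_of_isCompact (fun K L hK hL hK₀ hL₀ => ?_) hA hB
    (left_ne_zero_of_mul hAB.ne') (right_ne_zero_of_mul hAB.ne')
  rw [eq_div_one_add_mul hp₀ hq]
  subst hμ
  exact (BorellBrascampLieb.of_isAddHaarMeasure ν).powerMean_withDensity_le hp₀
    (one_add_mul_pos_of_mem hp) hlam hwm.ennreal_ofReal ofReal_w_concave hK.measurableSet
    hL.measurableSet ((hK.smul lam).add (hL.smul (1 - lam))).measurableSet Subset.rfl hK₀ hL₀

/-- Borell--Brascamp--Lieb: if `w` is a `p`-concave density with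
`p ∈ (-1/n, 0) ∪ (0, ∞)` and `1/q = 1/p + n`, then `μ = w dx` is `q`-concave. -/
theorem stmt0 (n : ℕ) (hn : 1 ≤ n) (p q : ℝ)
    (hp : p ∈ Set.Ioo (-(1 / (n : ℝ))) 0 ∪ Set.Ioi (0 : ℝ))
    (hq : 1 / q = 1 / p + (n : ℝ))
    (w : (Fin n → ℝ) → ℝ) (hwm : Measurable w) (hw0 : ∀ x, 0 ≤ w x)
    (hwconc : ∀ x y : Fin n → ℝ, 0 < w x * w y → ∀ lam ∈ Set.Ioo (0 : ℝ) 1,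
      (lam * w x ^ p + (1 - lam) * w y ^ p) ^ (1 / p) ≤ w (lam • x + (1 - lam) • y))
    (μ : Measure (Fin n → ℝ))
    (hμ : μ = volume.withDensity fun x => ENNReal.ofReal (w x)) :
    ∀ A B : Set (Fin n → ℝ), MeasurableSet A → MeasurableSet B → 0 < μ A * μ B →
      ∀ lam ∈ Set.Ioo (0 : ℝ) 1,
        (ENNReal.ofReal lam * μ A ^ q + ENNReal.ofReal (1 - lam) * μ B ^ q) ^ (1 / q) ≤
          innerMeasure μ (lam • A + (1 - lam) • B) := by
  intro A B hA hB hAB lam hlam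
  exact stmt0_general (ν := volume) (by simpa using hp) (by simpa using hq) hlam hwm
    (fun x y hx hy => hwconc x y (mul_pos hx hy) lam hlam) hμ hA hB hAB
end

section
/- Let n ≥ 1, p ∈ (−1/n, 0), and let q satisfy 1/q = 1/p + n (so q < 0). Let w : ℝⁿ∖{0} → [0,∞) be a p-homogeneous Borel density, and let μ be the measure with density w with respect to Lebesgue measure. Let ‖·‖_K be a semi-norm on ℝⁿ with open unit ball K such that μ(ℝⁿ∖K) < ∞. Then for every Borel set C ⊆ ℝⁿ with μ(C) < ∞, μ⁻_K(C) ≥ −(1/q)·μ(ℝⁿ∖K)^q·μ(C)^{1−q}, and for every t > 0 equality holds for C = ℝⁿ∖(tK); i.e., complements of homothetic copies of K are isoperimetric minimizers. -/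
open MeasureTheory Set Filter
open scoped Pointwise ENNReal Topology

/-- The (outer) Minkowski boundary measure of `A` with respect to the "unit ball" `K`:
`μ⁺_K(A) := liminf_{ε → 0⁺} μ((A + εK) \ A) / ε`. -/
noncomputable def mBoundary {n : ℕ} (μ : Measure (Fin n → ℝ)) (K A : Set (Fin n → ℝ)) :
    ℝ≥0∞ :=
  Filter.liminf (fun ε : ℝ => μ ((A + ε • K) \ A) / ENNReal.ofReal ε) (𝓝[>] (0 : ℝ))

/-- The inner Minkowski boundary measure `μ⁻_K(C) := μ⁺_K(ℝⁿ \ C)`. -/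
noncomputable def mInnerBoundary {n : ℕ} (μ : Measure (Fin n → ℝ)) (K C : Set (Fin n → ℝ)) :
    ℝ≥0∞ :=
  mBoundary μ K Cᶜ

/-!
Let `μ` be homogeneous of degree `b = 1 / q < 0`. With respect to `μ`, the radial shift lowering `N`
by `δ` along every ray has Jacobian `(1 - δ / N x) ^ (b - 1)`, a decreasing function of `N x`. If
the shift carries `D` into `C`, then the integral of this weight over `D` is at most `μ C`, with
equality when `C = {ρ ≤ N}` and `D = {ρ + δ ≤ N}`. By the bathtub principle, a set of given weighted
integral has the largest measure when it is a superlevel set of `N`; hence eroding `C` by `ε K`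
leaves no more mass than eroding the superlevel set `{ρ ≤ N}` of the same measure `ρ ^ b * M`, where
`M = μ {1 ≤ N}`, and the lost mass is at least `(ρ ^ b - (ρ + ε) ^ b) * M`. Dividing by `ε → 0`
gives `-b * ρ ^ (b - 1) * M`, which is the isoperimetric bound.
-/

/-- Positive homogeneity of degree one, the value at the origin included; with subadditivity it
makes `N` a (not necessarily symmetric) semi-norm. -/
def IsPosHomogeneous {E : Type*} [SMul ℝ E] (N : E → ℝ) : Prop :=
  ∀ c : ℝ, 0 ≤ c → ∀ x, N (c • x) = c * N x

/-- The measure `μ` is homogeneous of degree `b`: `μ (c S) = c ^ b μ S` for `c > 0`. A density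
homogeneous of degree `d` on `ℝⁿ` yields a measure of degree `d + n`, so that a `p`-homogeneous
density in the sense `w (c x) ^ p = c w x ^ p` gives the degree `1 / p + n = 1 / q`. -/
def IsHomogeneousMeasure {E : Type*} [MeasurableSpace E] [SMul ℝ E] (μ : Measure E) (b : ℝ) :
    Prop :=
  ∀ c : ℝ, 0 < c → ∀ S : Set E, MeasurableSet S → μ (c • S) = ENNReal.ofReal (c ^ b) * μ S

/-- The map moving `x` towards the origin along its ray so that `N` decreases by `δ`, for a
positively homogeneous `N`; it has this meaning only where `0 < N x` and `δ ≤ N x`. -/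
noncomputable def radialShift {E : Type*} [SMul ℝ E] (N : E → ℝ) (δ : ℝ) (x : E) : E :=
  (1 - δ / N x) • x

section MeasureSpace

variable {α : Type*} [MeasurableSpace α] {μ : Measure α}

-- The bathtub principle: exchanging `B` for a set `A` on which `f` is smaller lowers the integral.
lemma setLIntegral_add_const_mul_measure_le {f : α → ℝ≥0∞} {c : ℝ≥0∞} {A B : Set α}
    (hA : MeasurableSet A) (hB : MeasurableSet B) (hAB : ∀ x ∈ A \ B, f x ≤ c)
    (hBA : ∀ x ∈ B \ A, c ≤ f x) :
    ∫⁻ x in A, f x ∂μ + c * μ B ≤ ∫⁻ x in B, f x ∂μ + c * μ A := by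
  have hf_A : ∫⁻ x in A \ B, f x ∂μ ≤ c * μ (A \ B) :=
    (setLIntegral_mono' (hA.diff hB) hAB).trans_eq (setLIntegral_const _ _)
  have hf_B : c * μ (B \ A) ≤ ∫⁻ x in B \ A, f x ∂μ :=
    (setLIntegral_const _ _).symm.trans_le (setLIntegral_mono' (hB.diff hA) hBA)
  rw [← lintegral_inter_add_sdiff f A hB, ← lintegral_inter_add_sdiff f B hA,
    ← measure_inter_add_sdiff A hB, ← measure_inter_add_sdiff B hA, inter_comm B A]
  calc
    _ = ∫⁻ x in A ∩ B, f x ∂μ + c * μ (A ∩ B) + (∫⁻ x in A \ B, f x ∂μ + c * μ (B \ A)) := by ring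
    _ ≤ ∫⁻ x in A ∩ B, f x ∂μ + c * μ (A ∩ B) + (c * μ (A \ B) + ∫⁻ x in B \ A, f x ∂μ) := by
      gcongr
    _ = _ := by ring

lemma lintegral_Ioi_setLIntegral_le_swap [SFinite μ] {N : α → ℝ} (hN : Measurable N)
    {g : ℝ → α → ℝ≥0∞} (hg : Measurable (Function.uncurry g)) :
    ∫⁻ u in Ioi (0 : ℝ), ∫⁻ x in {x | u ≤ N x}, g u x ∂μ =
      ∫⁻ x in {x | 0 < N x}, (∫⁻ u in Ioc 0 (N x), g u x) ∂μ := by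
  set S : Set (ℝ × α) := {z | 0 < z.1 ∧ z.1 ≤ N z.2}
  have hS : MeasurableSet S := (measurableSet_lt measurable_const measurable_fst).inter
    (measurableSet_le measurable_fst (hN.comp measurable_snd))
  have hleft (u : ℝ) : ∫⁻ x, S.indicator (Function.uncurry g) (u, x) ∂μ =
      (Ioi (0 : ℝ)).indicator (fun u => ∫⁻ x in {x | u ≤ N x}, g u x ∂μ) u := by
    by_cases hu : 0 < u
    · rw [indicator_of_mem (mem_Ioi.2 hu),
        ← lintegral_indicator (measurableSet_le measurable_const hN)]
      simp [S, hu, indicator_apply]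
    · simp [S, hu]
  have hright (x : α) : ∫⁻ u, S.indicator (Function.uncurry g) (u, x) =
      {x | 0 < N x}.indicator (fun x => ∫⁻ u in Ioc 0 (N x), g u x) x := by
    by_cases hx : 0 < N x
    · rw [indicator_of_mem (s := {x | 0 < N x}) hx, ← lintegral_indicator measurableSet_Ioc]
      rfl
    · have hempty (u : ℝ) : (u, x) ∉ S := fun h => hx (h.1.trans_le h.2)
      simp [hx, hempty]
  rw [← lintegral_indicator measurableSet_Ioi,
    ← lintegral_indicator (measurableSet_lt measurable_const hN)]
  simp_rw [← hleft, ← hright]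
  exact lintegral_lintegral_swap (hg.indicator hS).aemeasurable

end MeasureSpace

lemma ofReal_mul_lintegral_Ioc_rpow {b r : ℝ} (hb : b < 0) (hr : 0 < r) :
    ENNReal.ofReal (-b * r ^ b) * ∫⁻ u in Ioc 0 r, ENNReal.ofReal (u ^ (-b - 1)) = 1 := by
  have hb' : -1 < -b - 1 := by linarith
  have hint : ∫⁻ u in Ioc 0 r, ENNReal.ofReal (u ^ (-b - 1)) = ENNReal.ofReal (r ^ (-b) / -b) := by
    rw [← ofReal_integral_eq_lintegral_ofReal, ← intervalIntegral.integral_of_le hr.le,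
      integral_rpow (Or.inl hb'), sub_add_cancel, Real.zero_rpow (neg_ne_zero.2 hb.ne), sub_zero]
    · exact (intervalIntegral.intervalIntegrable_rpow' hb').1
    · filter_upwards [ae_restrict_mem measurableSet_Ioc] with u hu using Real.rpow_nonneg hu.1.le _
  rw [hint, ← ENNReal.ofReal_mul (mul_nonneg (by linarith) (by positivity)),
    ENNReal.ofReal_eq_one, Real.rpow_neg hr.le]
  field_simp [hb.ne]

lemma setLIntegral_Ioi_rpow_comp_sub {a s : ℝ} (hs : 0 ≤ s) (φ : ℝ → ℝ≥0∞) :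
    ∫⁻ u in Ioi s, ENNReal.ofReal (u ^ a) * (ENNReal.ofReal ((1 - s / u) ^ a) * φ (u - s)) =
      ∫⁻ u in Ioi (0 : ℝ), ENNReal.ofReal (u ^ a) * φ u := by
  have hpre : Ioi s = (· - s) ⁻¹' Ioi (0 : ℝ) := by simp
  have hrpow (u : ℝ) (hu : u ∈ Ioi s) : u ^ a * (1 - s / u) ^ a = (u - s) ^ a := by
    have hu0 : 0 < u := hs.trans_lt hu
    rw [← Real.mul_rpow hu0.le (sub_nonneg.2 ((div_le_one hu0).2 (le_of_lt hu))), mul_one_sub,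
      mul_div_cancel₀ _ hu0.ne']
  calc
    _ = ∫⁻ u in Ioi s, ENNReal.ofReal ((u - s) ^ a) * φ (u - s) :=
      setLIntegral_congr_fun measurableSet_Ioi fun u hu => by
        rw [← mul_assoc, ← ENNReal.ofReal_mul (Real.rpow_nonneg (hs.trans (le_of_lt hu)) a),
          hrpow u hu]
    _ = _ := by
      rw [hpre]
      exact (measurePreserving_sub_right volume s).setLIntegral_comp_preimage_emb
        (MeasurableEquiv.subRight s).measurableEmbedding
        (fun u => ENNReal.ofReal (u ^ a) * φ u) (Ioi 0)

lemma one_sub_div_rpow_le_of_le {a δ r s : ℝ} (ha : a ≤ 0) (hδ : 0 ≤ δ) (hr : δ < r) (hrs : r ≤ s) :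
    (1 - δ / s) ^ a ≤ (1 - δ / r) ^ a := by
  have hr0 : 0 < r := hδ.trans_lt hr
  exact Real.rpow_le_rpow_of_nonpos (sub_pos.2 ((div_lt_one hr0).2 hr)) (by gcongr) ha

section Homogeneous

variable {E : Type*} [AddCommGroup E] [Module ℝ E] {N : E → ℝ}

lemma IsPosHomogeneous.radialShift_smul (hNhom : IsPosHomogeneous N) {u : ℝ} (hu : 0 < u)
    (δ : ℝ) (x : E) : radialShift N δ (u • x) = (u - δ / N x) • x := by
  rw [radialShift, hNhom u hu.le, smul_smul, sub_mul, one_mul, div_mul_eq_mul_div,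
    mul_comm u (N x), mul_div_mul_right _ _ hu.ne']

lemma IsPosHomogeneous.apply_radialShift (hNhom : IsPosHomogeneous N) {δ : ℝ} {x : E}
    (hx : 0 < N x) (hδx : δ ≤ N x) : N (radialShift N δ x) = N x - δ := by
  rw [radialShift, hNhom _ (sub_nonneg.2 ((div_le_one hx).2 hδx)), one_sub_mul,
    div_mul_cancel₀ _ hx.ne']

lemma IsPosHomogeneous.smul_setOf_le (hNhom : IsPosHomogeneous N) {c : ℝ} (hc : 0 < c)
    (r : ℝ) : c • {x | r ≤ N x} = {x | c * r ≤ N x} := by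
  ext x
  rw [mem_smul_set_iff_inv_smul_mem₀ hc.ne', mem_ofPred_eq, mem_ofPred_eq,
    hNhom _ (inv_nonneg.2 hc.le), le_inv_mul_iff₀ hc]

lemma IsPosHomogeneous.smul_setOf_lt (hNhom : IsPosHomogeneous N) {c : ℝ} (hc : 0 < c) (r : ℝ) :
    c • {x | N x < r} = {x | N x < c * r} := by
  ext x
  rw [mem_smul_set_iff_inv_smul_mem₀ hc.ne', mem_ofPred_eq, mem_ofPred_eq,
    hNhom _ (inv_nonneg.2 hc.le), inv_mul_lt_iff₀ hc]

lemma IsPosHomogeneous.lintegral_Ioi_rpow_mul_indicator_comp_radialShift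
    (hNhom : IsPosHomogeneous N) {a δ : ℝ} (hδ : 0 ≤ δ) (f : E → ℝ≥0∞) {x : E} (hx : 0 < N x) :
    ∫⁻ u in Ioi (0 : ℝ), ENNReal.ofReal (u ^ a) * {x | δ < N x}.indicator
        (fun x => ENNReal.ofReal ((1 - δ / N x) ^ a) * f (radialShift N δ x)) (u • x) =
      ∫⁻ u in Ioi (0 : ℝ), ENNReal.ofReal (u ^ a) * f (u • x) := by
  have hs : 0 ≤ δ / N x := by positivity
  rw [← setLIntegral_Ioi_rpow_comp_sub hs fun u => f (u • x),
    ← inter_eq_left.2 (Ioi_subset_Ioi hs), ← setLIntegral_indicator measurableSet_Ioi]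
  refine setLIntegral_congr_fun measurableSet_Ioi fun u hu => ?_
  have hu0 : 0 < u := hu
  have hmem : u • x ∈ {x | δ < N x} ↔ u ∈ Ioi (δ / N x) := by
    rw [mem_ofPred_eq, hNhom u hu0.le, ← div_lt_iff₀ hx, mem_Ioi]
  by_cases hux : u ∈ Ioi (δ / N x)
  · rw [indicator_of_mem (hmem.2 hux), indicator_of_mem hux, hNhom.radialShift_smul hu0,
      hNhom u hu0.le, div_div, mul_comm u]
  · rw [indicator_of_notMem (mt hmem.1 hux), indicator_of_notMem hux, mul_zero]

lemma IsPosHomogeneous.setOf_lt_inter_preimage_radialShift (hNhom : IsPosHomogeneous N) {δ ρ : ℝ}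
    (hδ : 0 ≤ δ) (hρ : 0 < ρ) :
    {x | δ < N x} ∩ radialShift N δ ⁻¹' {x | ρ ≤ N x} = {x | ρ + δ ≤ N x} := by
  have hsub : {x | ρ + δ ≤ N x} ⊆ {x | δ < N x} := fun x (hx : ρ + δ ≤ N x) =>
    show δ < N x by linarith
  refine Eq.trans (ext fun x => and_congr_right fun (hx : δ < N x) => ?_) (inter_eq_right.2 hsub)
  rw [mem_preimage, mem_ofPred_eq, hNhom.apply_radialShift (hδ.trans_lt hx) hx.le,
    le_sub_iff_add_le, mem_ofPred_eq]

variable [MeasurableSpace E] {μ : Measure E} {b : ℝ}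

lemma IsHomogeneousMeasure.measure_setOf_le (hμ : IsHomogeneousMeasure μ b) (hN : Measurable N)
    (hNhom : IsPosHomogeneous N) {r : ℝ} (hr : 0 < r) :
    μ {x | r ≤ N x} = ENNReal.ofReal (r ^ b) * μ {x | 1 ≤ N x} := by
  rw [← hμ r hr _ (measurableSet_le measurable_const hN), hNhom.smul_setOf_le hr, mul_one]

lemma IsHomogeneousMeasure.measure_eq_zero_of_forall_smul_subset (hμ : IsHomogeneousMeasure μ b)
    (hb : b < 0) {S C : Set E} (hS : MeasurableSet S) (hC : μ C ≠ ⊤)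
    (hSC : ∀ c : ℝ, 0 < c → c ≤ 1 → c • S ⊆ C) : μ S = 0 := by
  have htop : Tendsto (fun c : ℝ => ENNReal.ofReal (c ^ b)) (𝓝[>] 0) (𝓝 ⊤) :=
    ENNReal.tendsto_ofReal_atTop.comp (tendsto_rpow_neg_nhdsGT_zero hb)
  by_contra hS0
  have hlim : Tendsto (fun c : ℝ => μ (c • S)) (𝓝[>] 0) (𝓝 ⊤) := by
    rw [← ENNReal.top_mul hS0]
    refine (ENNReal.Tendsto.mul_const htop (Or.inl ENNReal.top_ne_zero)).congr' ?_
    filter_upwards [self_mem_nhdsWithin] with c hc using (hμ c hc S hS).symm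
  refine hC (top_le_iff.1 (le_of_tendsto hlim ?_))
  filter_upwards [Ioc_mem_nhdsGT one_pos] with c hc using measure_mono (hSC c hc.1 hc.2)

lemma IsHomogeneousMeasure.measure_setOf_le_ne_top (hμ : IsHomogeneousMeasure μ b)
    (hN : Measurable N) (hNhom : IsPosHomogeneous N)
    (hM : μ {x | 1 ≤ N x} ≠ ⊤) {r : ℝ} (hr : 0 < r) : μ {x | r ≤ N x} ≠ ⊤ := by
  rw [hμ.measure_setOf_le hN hNhom hr]
  exact ENNReal.mul_ne_top ENNReal.ofReal_ne_top hM

lemma IsHomogeneousMeasure.measure_inter_lt_eq_zero_of_sub_mem (hμ : IsHomogeneousMeasure μ b)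
    (hb : b < 0) (hN : Measurable N) (hNhom : IsPosHomogeneous N)
    {ε : ℝ} (hε : 0 < ε) {C D : Set E} (hC : μ C ≠ ⊤) (hD : MeasurableSet D)
    (hDC : ∀ x ∈ D, ∀ k, N k < ε → x - k ∈ C) : μ (D ∩ {x | N x < ε}) = 0 := by
  refine hμ.measure_eq_zero_of_forall_smul_subset hb
    (hD.inter (measurableSet_lt hN measurable_const)) hC fun c hc hc1 => ?_
  rintro _ ⟨x, ⟨hxD, hxε⟩, rfl⟩
  have hx : N ((1 - c) • x) < ε := by
    have hxε' : N x < ε := hxε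
    rw [hNhom _ (by linarith)]
    nlinarith
  simpa only [sub_smul, one_smul, sub_sub_cancel] using hDC x hxD _ hx

lemma IsHomogeneousMeasure.continuousAt_measure_setOf_le (hμ : IsHomogeneousMeasure μ b)
    (hN : Measurable N) (hNhom : IsPosHomogeneous N) (hM : μ {x | 1 ≤ N x} ≠ ⊤) {r : ℝ}
    (hr : 0 < r) : ContinuousAt (fun r => μ {x | r ≤ N x}) r := by
  have hrpow : ContinuousAt (fun r : ℝ => ENNReal.ofReal (r ^ b) * μ {x | 1 ≤ N x}) r :=
    ENNReal.Tendsto.mul_const (ENNReal.continuous_ofReal.continuousAt.comp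
      (Real.continuousAt_rpow_const r b (Or.inl hr.ne'))) (Or.inr hM)
  refine hrpow.congr ?_
  filter_upwards [lt_mem_nhds hr] with s hs using (hμ.measure_setOf_le hN hNhom hs).symm

lemma IsHomogeneousMeasure.measure_annulus (hμ : IsHomogeneousMeasure μ b) (hN : Measurable N)
    (hNhom : IsPosHomogeneous N) (hM : μ {x | 1 ≤ N x} ≠ ⊤) {ε ρ : ℝ} (hε : 0 ≤ ε) (hρ : 0 < ρ) :
    μ ({x | ρ ≤ N x} \ {x | ρ + ε ≤ N x}) = μ {x | ρ ≤ N x} - μ {x | ρ + ε ≤ N x} :=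
  measure_sdiff (fun x (hx : ρ + ε ≤ N x) => show ρ ≤ N x by linarith)
    (measurableSet_le measurable_const hN).nullMeasurableSet
    (hμ.measure_setOf_le_ne_top hN hNhom hM (by linarith))

lemma IsHomogeneousMeasure.tendsto_measure_annulus_div (hμ : IsHomogeneousMeasure μ b)
    (hN : Measurable N) (hNhom : IsPosHomogeneous N) (hM : μ {x | 1 ≤ N x} ≠ ⊤) {ρ : ℝ}
    (hρ : 0 < ρ) :
    Tendsto (fun ε : ℝ => μ ({x | ρ ≤ N x} \ {x | ρ + ε ≤ N x}) / ENNReal.ofReal ε) (𝓝[>] 0)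
      (𝓝 (ENNReal.ofReal (-b * ρ ^ (b - 1)) * μ {x | 1 ≤ N x})) := by
  have hslope : Tendsto (fun ε : ℝ => (ρ ^ b - (ρ + ε) ^ b) / ε) (𝓝[>] 0)
      (𝓝 (-b * ρ ^ (b - 1))) := by
    rw [neg_mul]
    refine (Real.hasDerivAt_rpow_const (p := b)
      (Or.inl hρ.ne')).tendsto_slope_zero_right.neg.congr fun ε => ?_
    rw [smul_eq_mul, inv_mul_eq_div, ← neg_div, neg_sub]
  refine (ENNReal.Tendsto.mul_const (ENNReal.tendsto_ofReal hslope) (Or.inr hM)).congr' ?_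
  filter_upwards [self_mem_nhdsWithin] with ε (hε : 0 < ε)
  rw [hμ.measure_annulus hN hNhom hM hε.le hρ, hμ.measure_setOf_le hN hNhom hρ,
    hμ.measure_setOf_le hN hNhom (by linarith : 0 < ρ + ε), ← ENNReal.sub_mul fun _ _ => hM,
    ← ENNReal.ofReal_sub _ (by positivity), ENNReal.mul_div_right_comm,
    ← ENNReal.ofReal_div_of_pos hε]

variable [MeasurableSMul₂ ℝ E]

lemma measurable_radialShift (hN : Measurable N) (δ : ℝ) : Measurable (radialShift N δ) := by
  unfold radialShift
  fun_prop

lemma IsHomogeneousMeasure.setLIntegral_comp_smul (hμ : IsHomogeneousMeasure μ b) {c : ℝ}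
    (hc : 0 < c) {f : E → ℝ≥0∞} (hf : Measurable f) {S : Set E} (hS : MeasurableSet S) :
    ∫⁻ x in S, f (c • x) ∂μ = ENNReal.ofReal (c ^ (-b)) * ∫⁻ x in c • S, f x ∂μ := by
  have hmap : μ.map (c • ·) = ENNReal.ofReal (c ^ (-b)) • μ := by
    ext T hT
    rw [Measure.map_apply (measurable_const_smul c) hT, preimage_smul₀ hc.ne',
      hμ _ (inv_pos.2 hc) _ hT, Real.inv_rpow hc.le, ← Real.rpow_neg hc.le, Measure.smul_apply,
      smul_eq_mul]
  rw [← smul_eq_mul, ← lintegral_smul_measure, ← Measure.restrict_smul, ← hmap,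
    setLIntegral_map (hS.const_smul_of_ne_zero hc.ne') hf (measurable_const_smul c),
    preimage_smul₀ hc.ne', inv_smul_smul₀ hc.ne']

lemma IsHomogeneousMeasure.setLIntegral_rpow_mul_comp_smul (hμ : IsHomogeneousMeasure μ b)
    (hN : Measurable N) (hNhom : IsPosHomogeneous N) {f : E → ℝ≥0∞} (hf : Measurable f) {u : ℝ}
    (hu : 0 < u) :
    ∫⁻ x in {x | 1 ≤ N x}, ENNReal.ofReal (N x ^ b) * f (u • x) ∂μ =
      ENNReal.ofReal (u ^ (-b - b)) * ∫⁻ x in {x | u ≤ N x}, ENNReal.ofReal (N x ^ b) * f x ∂μ := by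
  have hN_smul (x : E) (hx : x ∈ {x | 1 ≤ N x}) :
      ENNReal.ofReal (N x ^ b) = ENNReal.ofReal (u ^ (-b)) * ENNReal.ofReal (N (u • x) ^ b) := by
    rw [← ENNReal.ofReal_mul (by positivity), hNhom u hu.le,
      Real.mul_rpow hu.le (zero_le_one.trans hx), ← mul_assoc, ← Real.rpow_add hu,
      neg_add_cancel, Real.rpow_zero, one_mul]
  have hg : Measurable fun x => ENNReal.ofReal (N x ^ b) * f x := by fun_prop
  calc
    _ = ∫⁻ x in {x | 1 ≤ N x}, ENNReal.ofReal (u ^ (-b)) *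
          (ENNReal.ofReal (N (u • x) ^ b) * f (u • x)) ∂μ :=
      setLIntegral_congr_fun (measurableSet_le measurable_const hN) fun x hx => by
        rw [hN_smul x hx, mul_assoc]
    _ = _ := by
      rw [lintegral_const_mul' _ _ ENNReal.ofReal_ne_top,
        hμ.setLIntegral_comp_smul hu hg (measurableSet_le measurable_const hN),
        hNhom.smul_setOf_le hu, mul_one, ← mul_assoc, ← ENNReal.ofReal_mul (by positivity),
        ← Real.rpow_add hu, ← sub_eq_add_neg]

-- Polar coordinates, the directions being sampled by the restriction of `μ` to `{1 ≤ N}`.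
lemma IsHomogeneousMeasure.setLIntegral_pos_eq_polar [SFinite μ] (hμ : IsHomogeneousMeasure μ b)
    (hb : b < 0) (hN : Measurable N) (hNhom : IsPosHomogeneous N) {f : E → ℝ≥0∞}
    (hf : Measurable f) :
    ∫⁻ x in {x | 0 < N x}, f x ∂μ =
      ENNReal.ofReal (-b) * ∫⁻ x in {x | 1 ≤ N x}, ENNReal.ofReal (N x ^ b) *
        (∫⁻ u in Ioi (0 : ℝ), ENNReal.ofReal (u ^ (b - 1)) * f (u • x)) ∂μ := by
  have hslice (u : ℝ) (hu : u ∈ Ioi 0) :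
      ∫⁻ x in {x | 1 ≤ N x}, ENNReal.ofReal (N x ^ b) *
          (ENNReal.ofReal (u ^ (b - 1)) * f (u • x)) ∂μ =
        ∫⁻ x in {x | u ≤ N x}, ENNReal.ofReal (N x ^ b) * f x *
          ENNReal.ofReal (u ^ (-b - 1)) ∂μ := by
    have hu' : 0 < u := hu
    rw [hμ.setLIntegral_rpow_mul_comp_smul (f := fun x => ENNReal.ofReal (u ^ (b - 1)) * f x) hN
      hNhom (by fun_prop) hu', ← lintegral_const_mul _ (by fun_prop)]
    refine lintegral_congr fun x => ?_
    rw [show -b - 1 = -b - b + (b - 1) by ring, Real.rpow_add hu',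
      ENNReal.ofReal_mul (by positivity)]
    ring
  have hradial (x : E) (hx : x ∈ {x | 0 < N x}) :
      ENNReal.ofReal (-b) *
        ∫⁻ u in Ioc 0 (N x), ENNReal.ofReal (N x ^ b) * f x * ENNReal.ofReal (u ^ (-b - 1)) =
      f x := by
    rw [lintegral_const_mul _ (by fun_prop), mul_right_comm, ← mul_assoc, ← mul_assoc,
      ← ENNReal.ofReal_mul (neg_nonneg.2 hb.le), ofReal_mul_lintegral_Ioc_rpow hb hx, one_mul]
  symm
  calc
    _ = ENNReal.ofReal (-b) * ∫⁻ x in {x | 1 ≤ N x}, (∫⁻ u in Ioi (0 : ℝ),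
          ENNReal.ofReal (N x ^ b) * (ENNReal.ofReal (u ^ (b - 1)) * f (u • x))) ∂μ := by
      congr 1
      exact lintegral_congr fun x => (lintegral_const_mul _ (by fun_prop)).symm
    _ = ENNReal.ofReal (-b) * ∫⁻ u in Ioi (0 : ℝ), ∫⁻ x in {x | u ≤ N x},
          ENNReal.ofReal (N x ^ b) * f x * ENNReal.ofReal (u ^ (-b - 1)) ∂μ := by
      rw [lintegral_lintegral_swap (by fun_prop),
        setLIntegral_congr_fun measurableSet_Ioi hslice]
    _ = ENNReal.ofReal (-b) * ∫⁻ x in {x | 0 < N x}, (∫⁻ u in Ioc 0 (N x),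
          ENNReal.ofReal (N x ^ b) * f x * ENNReal.ofReal (u ^ (-b - 1))) ∂μ := by
      rw [lintegral_Ioi_setLIntegral_le_swap hN (by fun_prop)]
    _ = ∫⁻ x in {x | 0 < N x}, f x ∂μ := by
      rw [← lintegral_const_mul' _ _ ENNReal.ofReal_ne_top]
      exact setLIntegral_congr_fun (measurableSet_lt measurable_const hN) hradial

lemma IsHomogeneousMeasure.setLIntegral_comp_radialShift [SFinite μ]
    (hμ : IsHomogeneousMeasure μ b) (hb : b < 0) (hN : Measurable N) (hNhom : IsPosHomogeneous N)
    {f : E → ℝ≥0∞} (hf : Measurable f) {δ : ℝ} (hδ : 0 ≤ δ) :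
    ∫⁻ x in {x | δ < N x}, ENNReal.ofReal ((1 - δ / N x) ^ (b - 1)) * f (radialShift N δ x) ∂μ =
      ∫⁻ x in {x | 0 < N x}, f x ∂μ := by
  set g : E → ℝ≥0∞ := fun x => ENNReal.ofReal ((1 - δ / N x) ^ (b - 1)) * f (radialShift N δ x)
  have hset : MeasurableSet {x | δ < N x} := measurableSet_lt measurable_const hN
  have hg : Measurable g := by
    have := measurable_radialShift hN δ
    fun_prop
  have hsub : {x | δ < N x} ⊆ {x | 0 < N x} := fun x hx => hδ.trans_lt hx
  rw [← inter_eq_left.2 hsub, ← setLIntegral_indicator hset,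
    hμ.setLIntegral_pos_eq_polar hb hN hNhom (hg.indicator hset),
    hμ.setLIntegral_pos_eq_polar hb hN hNhom hf]
  congr 1
  exact setLIntegral_congr_fun (measurableSet_le measurable_const hN) fun x hx => by
    rw [hNhom.lintegral_Ioi_rpow_mul_indicator_comp_radialShift hδ f (zero_lt_one.trans_le hx)]

lemma IsHomogeneousMeasure.setLIntegral_preimage_radialShift [SFinite μ]
    (hμ : IsHomogeneousMeasure μ b) (hb : b < 0) (hN : Measurable N) (hNhom : IsPosHomogeneous N)
    {δ : ℝ} (hδ : 0 ≤ δ) {C : Set E} (hC : MeasurableSet C) :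
    ∫⁻ x in {x | δ < N x} ∩ radialShift N δ ⁻¹' C, ENNReal.ofReal ((1 - δ / N x) ^ (b - 1)) ∂μ =
      μ ({x | 0 < N x} ∩ C) := by
  have hpre : MeasurableSet (radialShift N δ ⁻¹' C) := measurable_radialShift hN δ hC
  have h := hμ.setLIntegral_comp_radialShift hb hN hNhom
    (f := C.indicator 1) (measurable_one.indicator hC) hδ
  rw [lintegral_indicator_one hC, Measure.restrict_apply hC, inter_comm C] at h
  rw [← h, inter_comm, ← setLIntegral_indicator hpre]
  refine lintegral_congr fun x => ?_
  by_cases hx : radialShift N δ x ∈ C <;> simp [hx]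

lemma IsHomogeneousMeasure.measure_le_of_mapsTo_radialShift [SFinite μ]
    (hμ : IsHomogeneousMeasure μ b) (hb : b < 0) (hN : Measurable N)
    (hNhom : IsPosHomogeneous N) (hM : μ {x | 1 ≤ N x} ≠ ⊤)
    {δ ρ : ℝ} (hδ : 0 ≤ δ) (hρ : 0 < ρ) {C D : Set E} (hC : MeasurableSet C)
    (hD : MeasurableSet D) (hDδ : D ⊆ {x | δ < N x}) (hDC : MapsTo (radialShift N δ) D C)
    (hCρ : μ C ≤ μ {x | ρ ≤ N x}) : μ D ≤ μ {x | ρ + δ ≤ N x} := by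
  set g : E → ℝ≥0∞ := fun x => ENNReal.ofReal ((1 - δ / N x) ^ (b - 1))
  set A : Set E := {x | ρ + δ ≤ N x}
  set c : ℝ≥0∞ := ENNReal.ofReal ((1 - δ / (ρ + δ)) ^ (b - 1))
  have hρ_pos : {x | ρ ≤ N x} ⊆ {x | 0 < N x} := fun x hx => hρ.trans_le hx
  have hgA : ∫⁻ x in A, g x ∂μ = μ {x | ρ ≤ N x} := by
    rw [show A = _ from (hNhom.setOf_lt_inter_preimage_radialShift hδ hρ).symm,
      hμ.setLIntegral_preimage_radialShift hb hN hNhom hδ (measurableSet_le measurable_const hN),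
      inter_eq_right.2 hρ_pos]
  have hgD : ∫⁻ x in D, g x ∂μ ≤ μ {x | ρ ≤ N x} := calc
    _ ≤ ∫⁻ x in {x | δ < N x} ∩ radialShift N δ ⁻¹' C, g x ∂μ :=
      lintegral_mono_set (subset_inter hDδ hDC)
    _ ≤ μ C := (hμ.setLIntegral_preimage_radialShift hb hN hNhom hδ hC).trans_le
      (measure_mono inter_subset_right)
    _ ≤ _ := hCρ
  have hbathtub : ∫⁻ x in A, g x ∂μ + c * μ D ≤ ∫⁻ x in D, g x ∂μ + c * μ A := by
    refine setLIntegral_add_const_mul_measure_le (measurableSet_le measurable_const hN) hD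
      (fun x hx => ?_) fun x hx => ?_
    · exact ENNReal.ofReal_le_ofReal <|
        one_sub_div_rpow_le_of_le (by linarith) hδ (by linarith) hx.1
    · exact ENNReal.ofReal_le_ofReal <|
        one_sub_div_rpow_le_of_le (by linarith) hδ (hDδ hx.1) (le_of_not_ge hx.2)
  have hρ_top : μ {x | ρ ≤ N x} ≠ ⊤ := hμ.measure_setOf_le_ne_top hN hNhom hM hρ
  have hratio : 0 < 1 - δ / (ρ + δ) := sub_pos.2 ((div_lt_one (by linarith)).2 (by linarith))
  have hc : c ≠ 0 := (ENNReal.ofReal_pos.2 (Real.rpow_pos_of_pos hratio _)).ne'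
  rw [hgA] at hbathtub
  exact (ENNReal.mul_le_mul_iff_right hc ENNReal.ofReal_ne_top).1 <|
    (ENNReal.add_le_add_iff_left hρ_top).1 (hbathtub.trans (by gcongr))

lemma IsHomogeneousMeasure.measure_le_of_sub_mem [SFinite μ] (hμ : IsHomogeneousMeasure μ b)
    (hb : b < 0) (hN : Measurable N) (hNhom : IsPosHomogeneous N)
    (hM : μ {x | 1 ≤ N x} ≠ ⊤) {ε ρ : ℝ} (hε : 0 < ε) (hρ : 0 < ρ) {C D : Set E}
    (hC : MeasurableSet C) (hD : MeasurableSet D) (hDC : ∀ x ∈ D, ∀ k, N k < ε → x - k ∈ C)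
    (hCρ : μ C ≤ μ {x | ρ ≤ N x}) : μ D ≤ μ {x | ρ + ε ≤ N x} := by
  have hC_top : μ C ≠ ⊤ := ne_top_of_le_ne_top (hμ.measure_setOf_le_ne_top hN hNhom hM hρ) hCρ
  have hinner : μ (D ∩ {x | N x < ε}) = 0 :=
    hμ.measure_inter_lt_eq_zero_of_sub_mem hb hN hNhom hε hC_top hD hDC
  have hDε : MeasurableSet (D \ {x | N x < ε}) := hD.diff (measurableSet_lt hN measurable_const)
  have hshift : ∀ δ ∈ Ioo 0 ε, μ D ≤ μ {x | ρ + δ ≤ N x} := by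
    intro δ hδ
    have hlt : ∀ x ∈ D \ {x | N x < ε}, δ < N x := fun x hx => hδ.2.trans_le (not_lt.1 hx.2)
    rw [← measure_sdiff_null' hinner]
    refine hμ.measure_le_of_mapsTo_radialShift hb hN hNhom hM hδ.1.le hρ hC hDε hlt ?_ hCρ
    intro x hx
    have hx0 : 0 < N x := hδ.1.trans (hlt x hx)
    rw [radialShift, sub_smul, one_smul]
    refine hDC x hx.1 _ ?_
    rw [hNhom _ (div_nonneg hδ.1.le hx0.le), div_mul_cancel₀ _ hx0.ne']
    exact hδ.2
  have hlim : Tendsto (fun δ => μ {x | ρ + δ ≤ N x}) (𝓝[<] ε) (𝓝 (μ {x | ρ + ε ≤ N x})) :=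
    (hμ.continuousAt_measure_setOf_le hN hNhom hM (by linarith)).tendsto.comp
      ((continuous_const_add ρ).tendsto ε |>.mono_left nhdsWithin_le_nhds)
  refine ge_of_tendsto hlim ?_
  filter_upwards [Ioo_mem_nhdsLT hε] with δ hδ using hshift δ hδ

end Homogeneous

lemma continuous_of_sublinear {E : Type*} [NormedAddCommGroup E] [NormedSpace ℝ E]
    [FiniteDimensional ℝ E] {N : E → ℝ} (hNadd : ∀ x y, N (x + y) ≤ N x + N y)
    (hNhom : IsPosHomogeneous N) : Continuous N := by
  have hconvex : ConvexOn ℝ univ N := by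
    refine ⟨convex_univ, fun x _ y _ s t hs ht _ => ?_⟩
    simpa only [hNhom s hs, hNhom t ht, smul_eq_mul] using hNadd (s • x) (t • y)
  exact hconvex.locallyLipschitz.continuous

lemma setOf_lt_add_setOf_lt_subset {E : Type*} [Add E] {N : E → ℝ}
    (hNadd : ∀ x y, N (x + y) ≤ N x + N y) (r s : ℝ) :
    {x | N x < r} + {x | N x < s} ⊆ {x | N x < r + s} := by
  rintro _ ⟨x, hx, y, hy, rfl⟩
  exact (hNadd x y).trans_lt (add_lt_add hx hy)

lemma sub_mem_of_notMem_compl_add {E : Type*} [AddCommGroup E] {C V : Set E} {x k : E}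
    (hx : x ∉ Cᶜ + V) (hk : k ∈ V) : x - k ∈ C := by
  by_contra hxk
  exact hx ⟨x - k, hxk, k, hk, sub_add_cancel x k⟩

section Enlargement

variable {E : Type*} [AddCommGroup E] [Module ℝ E] [TopologicalSpace E] [IsTopologicalAddGroup E]
  [MeasurableSpace E] [BorelSpace E] {N : E → ℝ} {μ : Measure E} {b : ℝ}

lemma IsHomogeneousMeasure.measure_annulus_le_measure_add_sdiff [MeasurableSMul₂ ℝ E] [SFinite μ]
    (hμ : IsHomogeneousMeasure μ b) (hb : b < 0) (hN : Continuous N) (hNhom : IsPosHomogeneous N)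
    (hM : μ {x | 1 ≤ N x} ≠ ⊤) {ε ρ : ℝ} (hε : 0 < ε) (hρ : 0 < ρ) {C : Set E}
    (hC : MeasurableSet C) (hCρ : μ C = μ {x | ρ ≤ N x}) :
    μ ({x | ρ ≤ N x} \ {x | ρ + ε ≤ N x}) ≤ μ ((Cᶜ + {x | N x < ε}) \ Cᶜ) := by
  have hV : MeasurableSet (Cᶜ + {x | N x < ε}) :=
    (isOpen_lt hN continuous_const).add_left.measurableSet
  have hcompl : μ (Cᶜ + {x | N x < ε})ᶜ ≤ μ {x | ρ + ε ≤ N x} :=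
    hμ.measure_le_of_sub_mem hb hN.measurable hNhom hM hε hρ hC hV.compl
      (fun x hx k hk => sub_mem_of_notMem_compl_add hx hk) hCρ.le
  calc
    _ = μ {x | ρ ≤ N x} - μ {x | ρ + ε ≤ N x} :=
      hμ.measure_annulus hN.measurable hNhom hM hε.le hρ
    _ ≤ μ C - μ (Cᶜ + {x | N x < ε})ᶜ := by rw [hCρ]; gcongr
    _ ≤ μ (C \ (Cᶜ + {x | N x < ε})ᶜ) := le_measure_sdiff
    _ = _ := by rw [sdiff_compl, sdiff_compl, inter_comm]

lemma IsHomogeneousMeasure.measure_add_sdiff_eq_of_measure_eq_zero (hμ : IsHomogeneousMeasure μ b)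
    (hb : b < 0) (hN : Continuous N) (hNhom : IsPosHomogeneous N) (hM : μ {x | 1 ≤ N x} = 0)
    {ε : ℝ} (hε : 0 < ε) {C : Set E} (hC : μ C ≠ ⊤) :
    μ ((Cᶜ + {x | N x < ε}) \ Cᶜ) = μ C := by
  have hV : MeasurableSet (Cᶜ + {x | N x < ε}) :=
    (isOpen_lt hN continuous_const).add_left.measurableSet
  have hinner : μ ((Cᶜ + {x | N x < ε})ᶜ ∩ {x | N x < ε}) = 0 :=
    hμ.measure_inter_lt_eq_zero_of_sub_mem hb hN.measurable hNhom hε hC hV.compl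
      fun x hx k hk => sub_mem_of_notMem_compl_add hx hk
  have houter : μ {x | ε ≤ N x} = 0 := by
    rw [hμ.measure_setOf_le hN.measurable hNhom hε, hM, mul_zero]
  have hcompl : μ (Cᶜ + {x | N x < ε})ᶜ = 0 := by
    refine measure_mono_null (fun x hx => ?_) (measure_union_null hinner houter)
    exact (lt_or_ge (N x) ε).imp (fun h => ⟨hx, h⟩) id
  rw [sdiff_compl, inter_comm, ← sdiff_compl, measure_sdiff_null hcompl]

end Enlargement

section Level

variable {E : Type*} [AddCommGroup E] [Module ℝ E] [MeasurableSpace E] {N : E → ℝ} {μ : Measure E}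

lemma IsHomogeneousMeasure.ofReal_mul_measure_eq_rpow_mul_rpow {q : ℝ} (hq : q < 0)
    (hμ : IsHomogeneousMeasure μ (1 / q)) (hN : Measurable N) (hNhom : IsPosHomogeneous N)
    (hM : μ {x | 1 ≤ N x} ≠ ⊤) {ρ : ℝ} (hρ : 0 < ρ) :
    ENNReal.ofReal (-(1 / q) * ρ ^ (1 / q - 1)) * μ {x | 1 ≤ N x} =
      ENNReal.ofReal (-(1 / q)) * μ {x | 1 ≤ N x} ^ q * μ {x | ρ ≤ N x} ^ (1 - q) := by
  rw [hμ.measure_setOf_le hN hNhom hρ]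
  set M := μ {x | 1 ≤ N x}
  have hq' : 0 < 1 - q := by linarith
  rcases eq_or_ne M 0 with hM0 | hM0
  · rw [hM0, mul_zero, mul_zero, ENNReal.zero_rpow_of_pos hq', mul_zero]
  have hexp : 1 / q * (1 - q) = 1 / q - 1 := by rw [mul_one_sub, one_div_mul_cancel hq.ne]
  calc
    _ = ENNReal.ofReal (-(1 / q)) * (ENNReal.ofReal (ρ ^ (1 / q - 1)) * M ^ (q + (1 - q))) := by
      rw [add_sub_cancel, ENNReal.rpow_one, ENNReal.ofReal_mul, mul_assoc]
      exact (neg_pos.2 (one_div_neg.2 hq)).le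
    _ = _ := by
      rw [ENNReal.mul_rpow_of_nonneg _ _ hq'.le, ENNReal.rpow_add _ _ hM0 hM,
        ENNReal.ofReal_rpow_of_pos (by positivity), ← Real.rpow_mul hρ.le, hexp]
      ring

lemma IsHomogeneousMeasure.exists_measure_setOf_le_eq {b : ℝ} (hμ : IsHomogeneousMeasure μ b)
    (hb : b ≠ 0) (hN : Measurable N) (hNhom : IsPosHomogeneous N) (hM0 : μ {x | 1 ≤ N x} ≠ 0)
    (hM : μ {x | 1 ≤ N x} ≠ ⊤) {m : ℝ≥0∞} (hm0 : m ≠ 0) (hm : m ≠ ⊤) :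
    ∃ ρ : ℝ, 0 < ρ ∧ μ {x | ρ ≤ N x} = m := by
  have hratio_top : m / μ {x | 1 ≤ N x} ≠ ⊤ := ENNReal.div_ne_top hm hM0
  have hratio : 0 < (m / μ {x | 1 ≤ N x}).toReal :=
    ENNReal.toReal_pos (ENNReal.div_ne_zero.2 ⟨hm0, hM⟩) hratio_top
  refine ⟨(m / μ {x | 1 ≤ N x}).toReal ^ b⁻¹, by positivity, ?_⟩
  rw [hμ.measure_setOf_le hN hNhom (by positivity), Real.rpow_inv_rpow hratio.le hb,
    ENNReal.ofReal_toReal hratio_top, ENNReal.div_mul_cancel hM0 hM]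

end Level

section InnerBoundary

variable {n : ℕ} {μ : Measure (Fin n → ℝ)} {b : ℝ} {N : (Fin n → ℝ) → ℝ}

lemma IsHomogeneousMeasure.le_mInnerBoundary_of_measure_eq [SFinite μ]
    (hμ : IsHomogeneousMeasure μ b) (hb : b < 0) (hN : Continuous N) (hNhom : IsPosHomogeneous N)
    (hM : μ {x | 1 ≤ N x} ≠ ⊤) {ρ : ℝ} (hρ : 0 < ρ) {C : Set (Fin n → ℝ)} (hC : MeasurableSet C)
    (hCρ : μ C = μ {x | ρ ≤ N x}) :
    ENNReal.ofReal (-b * ρ ^ (b - 1)) * μ {x | 1 ≤ N x} ≤ mInnerBoundary μ {x | N x < 1} C := by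
  rw [← (hμ.tendsto_measure_annulus_div hN.measurable hNhom hM hρ).liminf_eq]
  refine liminf_le_liminf ?_
  filter_upwards [self_mem_nhdsWithin] with ε (hε : 0 < ε)
  rw [hNhom.smul_setOf_lt hε, mul_one]
  refine ENNReal.div_le_div_right ?_ _
  exact hμ.measure_annulus_le_measure_add_sdiff hb hN hNhom hM hε hρ hC hCρ

lemma IsHomogeneousMeasure.mInnerBoundary_eq_top_of_measure_eq_zero
    (hμ : IsHomogeneousMeasure μ b) (hb : b < 0) (hN : Continuous N) (hNhom : IsPosHomogeneous N)
    (hM : μ {x | 1 ≤ N x} = 0) {C : Set (Fin n → ℝ)} (hC0 : μ C ≠ 0) (hC : μ C ≠ ⊤) :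
    mInnerBoundary μ {x | N x < 1} C = ⊤ := by
  have hofReal : Tendsto ENNReal.ofReal (𝓝[>] 0) (𝓝 0) := by
    simpa using (ENNReal.continuous_ofReal.tendsto 0).mono_left nhdsWithin_le_nhds
  have hlim : Tendsto (fun ε : ℝ => μ C / ENNReal.ofReal ε) (𝓝[>] 0) (𝓝 ⊤) := by
    rw [← ENNReal.div_zero hC0]
    exact ENNReal.Tendsto.const_div hofReal (Or.inr hC)
  refine (hlim.congr' ?_).liminf_eq
  filter_upwards [self_mem_nhdsWithin] with ε (hε : 0 < ε)
  rw [hNhom.smul_setOf_lt hε, mul_one,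
    hμ.measure_add_sdiff_eq_of_measure_eq_zero hb hN hNhom hM hε hC]

lemma IsHomogeneousMeasure.mInnerBoundary_setOf_le_le (hμ : IsHomogeneousMeasure μ b)
    (hN : Measurable N) (hNadd : ∀ x y, N (x + y) ≤ N x + N y) (hNhom : IsPosHomogeneous N)
    (hM : μ {x | 1 ≤ N x} ≠ ⊤) {t : ℝ} (ht : 0 < t) :
    mInnerBoundary μ {x | N x < 1} {x | t ≤ N x} ≤
      ENNReal.ofReal (-b * t ^ (b - 1)) * μ {x | 1 ≤ N x} := by
  rw [← (hμ.tendsto_measure_annulus_div hN hNhom hM ht).liminf_eq]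
  refine liminf_le_liminf ?_
  filter_upwards [self_mem_nhdsWithin] with ε (hε : 0 < ε)
  have hcompl : {x | t ≤ N x}ᶜ = {x | N x < t} := by simp only [compl_ofPred, not_le]
  rw [hNhom.smul_setOf_lt hε, mul_one, sdiff_compl, inter_comm, hcompl]
  gcongr
  refine fun x hx => ⟨hx.1, fun h : t + ε ≤ N x => ?_⟩
  exact h.not_gt (setOf_lt_add_setOf_lt_subset hNadd t ε hx.2)

lemma IsHomogeneousMeasure.ofReal_mul_rpow_mul_rpow_le_mInnerBoundary [SFinite μ] {q : ℝ}
    (hq : q < 0) (hμ : IsHomogeneousMeasure μ (1 / q)) (hN : Continuous N)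
    (hNhom : IsPosHomogeneous N) (hM : μ {x | 1 ≤ N x} ≠ ⊤) {C : Set (Fin n → ℝ)}
    (hC : MeasurableSet C) (hC_top : μ C ≠ ⊤) :
    ENNReal.ofReal (-(1 / q)) * μ {x | 1 ≤ N x} ^ q * μ C ^ (1 - q) ≤
      mInnerBoundary μ {x | N x < 1} C := by
  have hb : 1 / q < 0 := one_div_neg.2 hq
  rcases eq_or_ne (μ C) 0 with hC0 | hC0
  · rw [hC0, ENNReal.zero_rpow_of_pos (by linarith), mul_zero]
    exact zero_le
  rcases eq_or_ne (μ {x | 1 ≤ N x}) 0 with hM0 | hM0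
  · rw [hμ.mInnerBoundary_eq_top_of_measure_eq_zero hb hN hNhom hM0 hC0 hC_top]
    exact le_top
  obtain ⟨ρ, hρ, hCρ⟩ :=
    hμ.exists_measure_setOf_le_eq hb.ne hN.measurable hNhom hM0 hM hC0 hC_top
  rw [← hCρ, ← hμ.ofReal_mul_measure_eq_rpow_mul_rpow hq hN.measurable hNhom hM hρ]
  exact hμ.le_mInnerBoundary_of_measure_eq hb hN hNhom hM hρ hC hCρ.symm

end InnerBoundary

section Density

lemma isHomogeneousMeasure_withDensity {E : Type*} [NormedAddCommGroup E] [NormedSpace ℝ E]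
    [FiniteDimensional ℝ E] [Nontrivial E] [MeasurableSpace E] [BorelSpace E] {ν : Measure E}
    [ν.IsAddHaarMeasure] {w : E → ℝ} {d : ℝ} (hw : Measurable w)
    (hwhom : ∀ c : ℝ, 0 < c → ∀ x : E, x ≠ 0 → w (c • x) = c ^ d * w x) :
    IsHomogeneousMeasure (ν.withDensity fun x => ENNReal.ofReal (w x))
      (d + Module.finrank ℝ E) := by
  intro c hc S hS
  have hcS : MeasurableSet (c • S) := hS.const_smul_of_ne_zero hc.ne'
  have hdensity : ∀ᵐ x ∂ν.restrict S,
      ENNReal.ofReal (w (c • x)) = ENNReal.ofReal (c ^ d) * ENNReal.ofReal (w x) := by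
    filter_upwards [ae_restrict_of_ae (Measure.ae_ne ν 0)] with x hx
    rw [hwhom c hc x hx, ENNReal.ofReal_mul (by positivity)]
  have hν : ν = ENNReal.ofReal (c ^ Module.finrank ℝ E) • ν.map (c • ·) := by
    rw [Measure.map_addHaar_smul ν hc.ne', abs_of_pos (by positivity), smul_smul,
      ← ENNReal.ofReal_mul (by positivity), mul_inv_cancel₀ (by positivity), ENNReal.ofReal_one,
      one_smul]
  rw [withDensity_apply _ hcS, withDensity_apply _ hS]
  calc
    _ = ENNReal.ofReal (c ^ Module.finrank ℝ E) * ∫⁻ x in S, ENNReal.ofReal (w (c • x)) ∂ν := by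
      conv_lhs => rw [hν, Measure.restrict_smul, lintegral_smul_measure, smul_eq_mul,
        setLIntegral_map hcS hw.ennreal_ofReal (measurable_const_smul c), preimage_smul₀ hc.ne',
        inv_smul_smul₀ hc.ne']
    _ = _ := by
      rw [lintegral_congr_ae hdensity, lintegral_const_mul' _ _ ENNReal.ofReal_ne_top, ← mul_assoc,
        ← ENNReal.ofReal_mul (by positivity), add_comm, Real.rpow_add hc, Real.rpow_natCast]

lemma apply_smul_eq_rpow_mul_of_rpow_apply_smul {E : Type*} [SMul ℝ E] {w : E → ℝ} {p c : ℝ}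
    (hp : p ≠ 0) (hw0 : ∀ x, 0 ≤ w x) (hc : 0 ≤ c) {x : E} (hx : w (c • x) ^ p = c * w x ^ p) :
    w (c • x) = c ^ (1 / p) * w x := by
  rw [← Real.rpow_rpow_inv (hw0 (c • x)) hp, hx, Real.mul_rpow hc (Real.rpow_nonneg (hw0 x) p),
    Real.rpow_rpow_inv (hw0 x) hp, one_div]

lemma one_div_add_neg {p r : ℝ} (hr : 0 < r) (hp : p ∈ Ioo (-(1 / r)) 0) : 1 / p + r < 0 := by
  have hinv : r < 1 / -p := (lt_one_div hr (neg_pos.2 hp.2)).2 (neg_lt.1 hp.1)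
  rw [one_div_neg_eq_neg_one_div] at hinv
  linarith

end Density

theorem stmt2_general {n : ℕ} {q : ℝ} (hq : q < 0) {μ : Measure (Fin n → ℝ)} [SFinite μ]
    (hμ : IsHomogeneousMeasure μ (1 / q)) {N : (Fin n → ℝ) → ℝ}
    (hNadd : ∀ x y, N (x + y) ≤ N x + N y) (hNhom : IsPosHomogeneous N)
    {K : Set (Fin n → ℝ)} (hK : K = {x | N x < 1}) (hKfin : μ Kᶜ < ⊤) :
    (∀ C : Set (Fin n → ℝ), MeasurableSet C → μ C < ⊤ →
      ENNReal.ofReal (-(1 / q)) * μ Kᶜ ^ q * μ C ^ (1 - q) ≤ mInnerBoundary μ K C) ∧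
    (∀ t : ℝ, 0 < t →
      mInnerBoundary μ K ((t • K)ᶜ) =
        ENNReal.ofReal (-(1 / q)) * μ Kᶜ ^ q * μ ((t • K)ᶜ) ^ (1 - q)) := by
  have hN : Continuous N := continuous_of_sublinear hNadd hNhom
  have hcompl (r : ℝ) : {x | N x < r}ᶜ = {x | r ≤ N x} := by simp only [compl_ofPred, not_lt]
  subst hK
  rw [hcompl] at hKfin ⊢
  have hlower {C : Set (Fin n → ℝ)} (hC : MeasurableSet C) (hCfin : μ C < ⊤) :=
    hμ.ofReal_mul_rpow_mul_rpow_le_mInnerBoundary hq hN hNhom hKfin.ne hC hCfin.ne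
  refine ⟨fun C => hlower, fun t ht => ?_⟩
  rw [hNhom.smul_setOf_lt ht, mul_one, hcompl]
  refine le_antisymm ?_ (hlower (measurableSet_le measurable_const hN.measurable)
    (hμ.measure_setOf_le_ne_top hN.measurable hNhom hKfin.ne ht).lt_top)
  rw [← hμ.ofReal_mul_measure_eq_rpow_mul_rpow hq hN.measurable hNhom hKfin.ne ht]
  exact hμ.mInnerBoundary_setOf_le_le hN.measurable hNadd hNhom hKfin.ne ht

/-- for a `p`-homogeneous density `w` on `ℝⁿ \ {0}` with `p ∈ (-1/n, 0)`,
`1/q = 1/p + n (< 0)`, and a semi-norm with open unit ball `K` with `μ(ℝⁿ∖K) < ∞`,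
`μ⁻_K(C) ≥ -(1/q) μ(ℝⁿ∖K)^q μ(C)^{1-q}` holds, with equality for the complements of
homothetic copies of `K`. -/
theorem stmt2 (n : ℕ) (hn : 1 ≤ n) (p q : ℝ)
    (hp : p ∈ Set.Ioo (-(1 / (n : ℝ))) 0) (hq : 1 / q = 1 / p + (n : ℝ))
    (w : (Fin n → ℝ) → ℝ) (hwm : Measurable w) (hw0 : ∀ x, 0 ≤ w x)
    (hwhom : ∀ c : ℝ, 0 < c → ∀ x : Fin n → ℝ, x ≠ 0 → w (c • x) ^ p = c * w x ^ p)
    (μ : Measure (Fin n → ℝ))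
    (hμ : μ = volume.withDensity fun x => ENNReal.ofReal (w x))
    (N : (Fin n → ℝ) → ℝ) (hN0 : ∀ x, 0 ≤ N x)
    (hNadd : ∀ x y, N (x + y) ≤ N x + N y)
    (hNhom : ∀ c : ℝ, 0 ≤ c → ∀ x, N (c • x) = c * N x)
    (K : Set (Fin n → ℝ)) (hK : K = {x | N x < 1})
    (hKfin : μ Kᶜ < ⊤) :
    (∀ C : Set (Fin n → ℝ), MeasurableSet C → μ C < ⊤ →
      ENNReal.ofReal (-(1 / q)) * μ Kᶜ ^ q * μ C ^ (1 - q) ≤ mInnerBoundary μ K C) ∧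
    (∀ t : ℝ, 0 < t →
      mInnerBoundary μ K ((t • K)ᶜ) =
        ENNReal.ofReal (-(1 / q)) * μ Kᶜ ^ q * μ ((t • K)ᶜ) ^ (1 - q)) := by
  have : NeZero n := ⟨by omega⟩
  have hq0 : q < 0 := one_div_neg.1 (hq ▸ one_div_add_neg (by exact_mod_cast hn) hp)
  have hμ_hom : IsHomogeneousMeasure μ (1 / q) := by
    have h := isHomogeneousMeasure_withDensity (ν := volume) hwm fun c hc x hx =>
      apply_smul_eq_rpow_mul_of_rpow_apply_smul hp.2.ne hw0 hc.le (hwhom c hc x hx)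
    rwa [Module.finrank_fin_fun, ← hq, ← hμ] at h
  have : SFinite μ := hμ ▸ inferInstance
  exact stmt2_general hq0 hμ_hom hNadd hNhom hK hKfin
end

section
/- Let n ≥ 1 and let μ be a finite Borel measure on ℝⁿ. Then the following are equivalent: (i) for all λ ∈ (0,1) and all Borel sets A, B ⊆ ℝⁿ, μ_*(ℝⁿ∖(λA+(1−λ)B)) ≤ max(μ(ℝⁿ∖A), μ(ℝⁿ∖B)) (μ is ∞-complemented concave); (ii) for all λ ∈ (0,1) and all Borel sets A, B ⊆ ℝⁿ with μ(A)·μ(B) > 0, μ_*(λA+(1−λ)B) ≥ min(μ(A), μ(B)) (μ is −∞-concave). -/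
open MeasureTheory Set Filter
open scoped Pointwise ENNReal

/-!
For measurable `A` and `B` one has `min (μ A) (μ B) + max (μ Aᶜ) (μ Bᶜ) = μ univ`, so for a finite
measure and a measurable set `S` the bounds `μ Sᶜ ≤ max (μ Aᶜ) (μ Bᶜ)` and `min (μ A) (μ B) ≤ μ S`
are equivalent. A Minkowski combination of measurable sets need not be measurable. Superadditivity
of the inner measure still gives one implication for every `S`; for the other, inner regularity
reduces to compact `A` and `B`, whose combination is compact by continuity of the vector
operations.
-/

section InnerMeasure

variable {α : Type*} [MeasurableSpace α] {μ : Measure α} {A B F S T : Set α}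

theorem innerMeasure_eq_biSup (S : Set α) :
    innerMeasure μ S = ⨆ (F : Set α) (_ : MeasurableSet F ∧ F ⊆ S), μ F := by
  simp only [innerMeasure, iSup_and']

theorem innerMeasure_le_iff {c : ℝ≥0∞} :
    innerMeasure μ S ≤ c ↔ ∀ F, MeasurableSet F → F ⊆ S → μ F ≤ c := by
  simp only [innerMeasure, iSup_le_iff]

theorem measure_le_innerMeasure (hF : MeasurableSet F) (hFS : F ⊆ S) :
    μ F ≤ innerMeasure μ S :=
  innerMeasure_le_iff.1 le_rfl F hF hFS

theorem innerMeasure_le_measure : innerMeasure μ S ≤ μ S :=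
  innerMeasure_le_iff.2 fun _ _ hFS => measure_mono hFS

theorem innerMeasure_add_le_innerMeasure_union (hST : Disjoint S T) :
    innerMeasure μ S + innerMeasure μ T ≤ innerMeasure μ (S ∪ T) := by
  rw [innerMeasure_eq_biSup S, innerMeasure_eq_biSup T]
  refine ENNReal.biSup_add_biSup_le' ⟨∅, .empty, empty_subset S⟩ ⟨∅, .empty, empty_subset T⟩ ?_
  rintro F ⟨hF, hFS⟩ G ⟨hG, hGT⟩
  calc μ F + μ G = μ (F ∪ G) := (measure_union (hST.mono hFS hGT) hG).symm
    _ ≤ innerMeasure μ (S ∪ T) := measure_le_innerMeasure (hF.union hG) (union_subset_union hFS hGT)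

theorem innerMeasure_add_innerMeasure_compl_le (μ : Measure α) (S : Set α) :
    innerMeasure μ S + innerMeasure μ Sᶜ ≤ μ univ :=
  calc innerMeasure μ S + innerMeasure μ Sᶜ
      ≤ innerMeasure μ (S ∪ Sᶜ) := innerMeasure_add_le_innerMeasure_union disjoint_compl_right
    _ ≤ μ univ := innerMeasure_le_measure.trans (measure_mono (subset_univ _))

theorem min_measure_add_max_measure_compl (hA : MeasurableSet A) (hB : MeasurableSet B) :
    min (μ A) (μ B) + max (μ Aᶜ) (μ Bᶜ) = μ univ := by
  have hAc : μ A + μ Aᶜ = μ univ := measure_add_measure_compl hA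
  have hBc : μ B + μ Bᶜ = μ univ := measure_add_measure_compl hB
  apply le_antisymm
  · rw [add_max]
    exact max_le ((add_le_add (min_le_left _ _) le_rfl).trans hAc.le)
      ((add_le_add (min_le_right _ _) le_rfl).trans hBc.le)
  · rw [min_add]
    exact le_min (hAc.ge.trans (add_le_add le_rfl (le_max_left _ _)))
      (hBc.ge.trans (add_le_add le_rfl (le_max_right _ _)))

variable [IsFiniteMeasure μ]

theorem innerMeasure_compl_le_max_of_min_le (hA : MeasurableSet A) (hB : MeasurableSet B)
    (h : min (μ A) (μ B) ≤ innerMeasure μ S) : innerMeasure μ Sᶜ ≤ max (μ Aᶜ) (μ Bᶜ) := by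
  have hmin : min (μ A) (μ B) ≠ ∞ := ((min_le_left _ _).trans_lt (measure_lt_top μ A)).ne
  refine ENNReal.le_of_add_le_add_left hmin ?_
  calc min (μ A) (μ B) + innerMeasure μ Sᶜ
      ≤ innerMeasure μ S + innerMeasure μ Sᶜ := by gcongr
    _ ≤ μ univ := innerMeasure_add_innerMeasure_compl_le μ S
    _ = min (μ A) (μ B) + max (μ Aᶜ) (μ Bᶜ) := (min_measure_add_max_measure_compl hA hB).symm

theorem min_le_measure_of_measure_compl_le_max (hA : MeasurableSet A) (hB : MeasurableSet B)
    (hS : MeasurableSet S) (h : μ Sᶜ ≤ max (μ Aᶜ) (μ Bᶜ)) : min (μ A) (μ B) ≤ μ S := by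
  have hmax : max (μ Aᶜ) (μ Bᶜ) ≠ ∞ := (max_lt (measure_lt_top μ _) (measure_lt_top μ _)).ne
  refine ENNReal.le_of_add_le_add_right hmax ?_
  calc min (μ A) (μ B) + max (μ Aᶜ) (μ Bᶜ)
      = μ univ := min_measure_add_max_measure_compl hA hB
    _ = μ S + μ Sᶜ := (measure_add_measure_compl hS).symm
    _ ≤ μ S + max (μ Aᶜ) (μ Bᶜ) := by gcongr

end InnerMeasure

theorem min_measure_le_of_forall_isCompact {X : Type*} [TopologicalSpace X] [MeasurableSpace X]
    {μ : Measure X} [μ.InnerRegular] {A B : Set X} (hA : MeasurableSet A) (hB : MeasurableSet B)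
    {c : ℝ≥0∞}
    (h : ∀ K ⊆ A, ∀ L ⊆ B, IsCompact K → IsCompact L → min (μ K) (μ L) ≤ c) :
    min (μ A) (μ B) ≤ c := by
  refine le_of_forall_lt fun b hb => ?_
  obtain ⟨K, hKA, hK, hbK⟩ := hA.exists_lt_isCompact (hb.trans_le (min_le_left _ _))
  obtain ⟨L, hLB, hL, hbL⟩ := hB.exists_lt_isCompact (hb.trans_le (min_le_right _ _))
  exact (lt_min hbK hbL).trans_le (h K hKA L hLB hK hL)

theorem isCompact_image2 {X Y Z : Type*} [TopologicalSpace X] [TopologicalSpace Y]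
    [TopologicalSpace Z] {f : X → Y → Z} (hf : Continuous f.uncurry) {K : Set X} {L : Set Y}
    (hK : IsCompact K) (hL : IsCompact L) : IsCompact (image2 f K L) :=
  image_uncurry_prod f K L ▸ (hK.prod hL).image hf

theorem smul_add_smul_eq_image2 {R E : Type*} [SMul R E] [Add E] (a b : R) (A B : Set E) :
    a • A + b • B = image2 (fun x y => a • x + b • y) A B := by
  simp only [← image2_add, ← image_smul, image2_image_left, image2_image_right]

theorem stmt10_general {X : Type*} [TopologicalSpace X] [T2Space X] [MeasurableSpace X]
    [OpensMeasurableSpace X] (μ : Measure X) [IsFiniteMeasure μ] [μ.InnerRegular]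
    {f : X → X → X} (hf : Continuous f.uncurry) :
    (∀ A B : Set X, MeasurableSet A → MeasurableSet B →
        innerMeasure μ (image2 f A B)ᶜ ≤ max (μ Aᶜ) (μ Bᶜ)) ↔
    (∀ A B : Set X, MeasurableSet A → MeasurableSet B → 0 < μ A * μ B →
        min (μ A) (μ B) ≤ innerMeasure μ (image2 f A B)) := by
  constructor
  · intro h A B hA hB _
    refine min_measure_le_of_forall_isCompact hA hB fun K hKA L hLB hK hL => ?_
    have hKL : MeasurableSet (image2 f K L) := (isCompact_image2 hf hK hL).measurableSet
    have hcompl : μ (image2 f K L)ᶜ ≤ max (μ Kᶜ) (μ Lᶜ) :=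
      (measure_le_innerMeasure hKL.compl subset_rfl).trans
        (h K L hK.measurableSet hL.measurableSet)
    calc min (μ K) (μ L)
        ≤ μ (image2 f K L) :=
          min_le_measure_of_measure_compl_le_max hK.measurableSet hL.measurableSet hKL hcompl
      _ ≤ innerMeasure μ (image2 f A B) := measure_le_innerMeasure hKL (image2_subset hKA hLB)
  · intro h A B hA hB
    refine innerMeasure_compl_le_max_of_min_le hA hB ?_
    rcases eq_zero_or_pos (μ A * μ B) with hzero | hpos
    · rcases mul_eq_zero.1 hzero with hA₀ | hB₀
      · simp [hA₀]
      · simp [hB₀]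
    · exact h A B hA hB hpos

/-- for a finite Borel measure `μ` on `ℝⁿ`, being `∞`-complemented concave
is equivalent to being `−∞`-concave. -/
theorem stmt10 (n : ℕ) (hn : 1 ≤ n) (μ : Measure (Fin n → ℝ)) (hfin : μ Set.univ < ⊤) :
    (∀ lam ∈ Set.Ioo (0 : ℝ) 1, ∀ A B : Set (Fin n → ℝ),
        MeasurableSet A → MeasurableSet B →
        innerMeasure μ ((lam • A + (1 - lam) • B)ᶜ) ≤ max (μ Aᶜ) (μ Bᶜ)) ↔
    (∀ lam ∈ Set.Ioo (0 : ℝ) 1, ∀ A B : Set (Fin n → ℝ),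
        MeasurableSet A → MeasurableSet B → 0 < μ A * μ B →
        min (μ A) (μ B) ≤ innerMeasure μ (lam • A + (1 - lam) • B)) := by
  have : IsFiniteMeasure μ := ⟨hfin⟩
  simp only [smul_add_smul_eq_image2]
  exact forall₂_congr fun lam _ => stmt10_general μ (by fun_prop)
end
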